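/- arXiv:2404.06959 — 2 statements merged into one kernel-verified Lean document; each statement's English description precedes it below -/
import Mathlib

section
/- Let B ⊂ A be a regular inclusion of simple unital C*-algebras with a finite-index conditional expectation, and let E₀ : A → B be the minimal conditional expectation. Then E₀ admits a unitary orthonormal quasi-basis: there exist finitely many unitaries v_1, …, v_m ∈ A such that E₀(v_k* v_l) = δ_{kl}·1 for all k, l and x = Σ_k E₀(x v_k) v_k* for every x ∈ A. -/
/-!
The proof compares the minimal expectation `E₀` with an explicitly constructed expectation `E₁` that
has a unitary orthonormal quasi-basis `v`, and shows that minimality forces `v` to be orthonormal and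
a quasi-basis for `E₀` as well.

Let `C` be the relative commutant of `B`. Finiteness of the index bounds the number of pairwise
orthogonal self-adjoint elements of `C` (`card_le_of_orthogonal`, a form of Bessel's inequality), so
`C` has a minimal projection and a full matrix block around it (`HasIndex.exists_block`). The
conjugates of the support of this block under the normalizer are equal or orthogonal, and their sum
commutes with the normalizer, hence is central in `A` by regularity, hence equals `1` by simplicity
of `A` (`HasIndex.exists_orbit`). Therefore `C` is a direct sum of `k` full matrix algebras, all of
the same size `n`, whose central unit projections are permuted transitively by the normalizer.
Averaging `E₀` over these matrix units yields a conditional expectation `E₁` whose restriction to `C` is the trace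
giving equal weight to all minimal projections (`HasIndex.exists_matrixUnits`); this trace is
invariant under conjugation by the normalizer (`IsUniform.invariant`). Because all blocks have the
same size, clock and shift unitaries `w α` form a basis of `C` that is orthonormal for `E₁`
(`isUnitaryBasis_weyl`).

A conditional expectation onto `B` vanishes on `u C` for a normalizing unitary `u` outside
`U(B) U(C)` (`mem_UBC_of_ne_zero`), so Bessel's inequality also gives finitely many coset
representatives `u g` (`HasIndex.exists_cosets`). The unitaries `v (g, α) = u g * w α` form an
orthonormal quasi-basis of `E₁` (`gram_eq`, `expand_eq`), so `E₁` has index `m`, their number.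

Finally, let `l` be a quasi-basis for `E₀` of index `r₀`, so `r₀ ≤ m` by minimality, and let
`y k = l k - ∑ i, v i E₀ (v i* l k)`. Bessel's identity (`bessel`), together with the trace property
and the invariance of `E₁`, gives `E₁ (∑ k, y k (y k)*) = (r₀ - 2 m + m) 1 = (r₀ - m) 1`. The left
side is positive and the right side is nonpositive, so both vanish, and faithfulness of `E₁` gives `y = 0`.
Hence `v` is a quasi-basis for `E₀`; expanding `v j` in it and applying `E₁ (v k* ·)` shows that it is
orthonormal for `E₀`.
-/

namespace RegularInclusion

variable {A : Type*} [NormedRing A] [StarRing A] [CStarRing A] [CompleteSpace A]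
  [NormedAlgebra ℂ A] [StarModule ℂ A]

/-- A conditional expectation of `A` onto the subset `B`: a `ℂ`-linear positive
`B`-bimodular projection of `A` onto `B`. -/
def IsCondExp (B : Set A) (E : A →ₗ[ℂ] A) : Prop :=
  (∀ x, E x ∈ B) ∧ (∀ b ∈ B, E b = b) ∧
  (∀ x, ∃ y, E (star x * x) = star y * y) ∧
  (∀ b₁ ∈ B, ∀ b₂ ∈ B, ∀ x, E (b₁ * x * b₂) = b₁ * E x * b₂)

/-- `l` is a right quasi-basis for `E`, witnessing finite index. -/
def IsRightQB (E : A →ₗ[ℂ] A) {n : ℕ} (l : Fin n → A) : Prop :=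
  ∀ x, x = ∑ i, E (x * l i) * star (l i)

/-- The centralizer (relative commutant) `C_A(B)` of `B` in `A`. -/
def cent (B : Set A) : Set A := {x | ∀ b ∈ B, x * b = b * x}

/-- The normalizer `N_A(B) = {u ∈ U(A) : uBu* = B}` of `B` in `A`. -/
def normalizer (B : Set A) : Set A :=
  {u | u ∈ unitary A ∧ (fun x => u * x * star u) '' B = B}

/-- The set `U(B)` of unitaries of `B`. -/
def UB (B : Set A) : Set A := {b | b ∈ B ∧ b ∈ unitary A}

/-- The set `U(B)·U(C_A(B))` of products of a unitary of `B` and a unitary of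
the centralizer of `B`. -/
def UBC (B : Set A) : Set A :=
  {x | ∃ b c, b ∈ B ∧ b ∈ unitary A ∧ c ∈ cent B ∧ c ∈ unitary A ∧ x = b * c}

/-- Simplicity of the C*-algebra (given as the subset `S` of `A`): the only closed
two-sided ideals of `S` are `{0}` and `S`. -/
def IsSimpleCStar (S : Set A) : Prop :=
  ∀ I : Set A, I ⊆ S → IsClosed I → (0 : A) ∈ I →
    (∀ x ∈ I, ∀ y ∈ I, x + y ∈ I) →
    (∀ x ∈ I, ∀ b ∈ S, x * b ∈ I ∧ b * x ∈ I) →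
    I = {0} ∨ I = S

/-- The intermediate C*-subalgebra `C := C*(B ∪ C_A(B))` generated by `B` and the
centralizer of `B`. -/
def genC (B : Set A) : StarSubalgebra ℂ A :=
  (StarAlgebra.adjoin ℂ (B ∪ cent B)).topologicalClosure

/-- Regularity of the inclusion `B ⊆ A`: the normalizer of `B` generates `A` as a
C*-algebra. -/
def IsRegular (B : Set A) : Prop :=
  (StarAlgebra.adjoin ℂ (normalizer B)).topologicalClosure = ⊤

/-- `E₀` is the minimal conditional expectation of `A` onto `B`: the finite-index
conditional expectation whose (scalar) Watatani index is least among all finite-index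
conditional expectations onto `B`. -/
def IsMinimalCondExp (B : Set A) (E₀ : A →ₗ[ℂ] A) : Prop :=
  IsCondExp B E₀ ∧
  ∃ (r₀ : ℝ) (n : ℕ) (l : Fin n → A), IsRightQB E₀ l ∧
    (∑ i, l i * star (l i)) = (r₀ : ℂ) • 1 ∧
    ∀ E : A →ₗ[ℂ] A, IsCondExp B E → ∀ (m : ℕ) (μ : Fin m → A), IsRightQB E μ →
      ∀ r : ℝ, (∑ i, μ i * star (μ i)) = (r : ℂ) • 1 → r₀ ≤ r

/-! ### Positive elements and positive maps -/

section Analytic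
variable {𝒜 : Type*} [CStarAlgebra 𝒜]

attribute [local instance] CStarAlgebra.spectralOrder CStarAlgebra.spectralOrderedRing

lemma exists_star_mul_self_sum {ι : Type*} (s : Finset ι) (y : ι → 𝒜) :
    ∃ w : 𝒜, ∑ i ∈ s, star (y i) * y i = star w * w := by
  have h : 0 ≤ ∑ i ∈ s, star (y i) * y i := Finset.sum_nonneg fun i _ => star_mul_self_nonneg _
  exact CStarAlgebra.nonneg_iff_eq_star_mul_self.1 h

lemma star_mul_self_eq_zero_of_sum {ι : Type*} (s : Finset ι) (y : ι → 𝒜)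
    (h : ∑ i ∈ s, star (y i) * y i = 0) : ∀ i ∈ s, star (y i) * y i = 0 :=
  (Finset.sum_eq_zero_iff_of_nonneg fun i _ => star_mul_self_nonneg (y i)).1 h

/-- A scalar of the form `y* y` is a nonnegative real. -/
lemma scalar_nonneg [Nontrivial 𝒜] {t : ℂ} {y : 𝒜} (h : t • (1 : 𝒜) = star y * y) :
    0 ≤ t.re ∧ t.im = 0 := by
  have him : t.im = 0 := by
    have h1 : star (t • (1 : 𝒜)) = t • 1 := by rw [h]; simp
    rw [star_smul, star_one] at h1
    exact Complex.conj_eq_iff_im.1 (smul_left_injective ℂ (one_ne_zero (α := 𝒜)) h1)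
  refine ⟨?_, him⟩
  have ht : t = (t.re : ℂ) := Complex.ext rfl (by simpa using him)
  have h0 : (0 : 𝒜) ≤ algebraMap ℝ 𝒜 t.re := by
    rw [Algebra.algebraMap_eq_smul_one, ← Complex.coe_smul, ← ht, h]; exact star_mul_self_nonneg _
  exact spectrum_nonneg_of_nonneg h0 (by simp [spectrum.scalar_eq])

/-- The hypothesis says `t a* a ≤ r` for all `t ≥ 0`, which bounds `t ‖a* a‖` uniformly in `t`. -/
lemma eq_zero_of_bounded_multiples {r : ℝ} {a : 𝒜}
    (h : ∀ t : ℝ, 0 ≤ t → ∃ w : 𝒜, (r : ℂ) • (1 : 𝒜) - (t : ℂ) • (star a * a) = star w * w) : a = 0 := by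
  by_contra ha
  have hpos : 0 < ‖star a * a‖ := by
    rw [CStarRing.norm_star_mul_self]; have := norm_pos_iff.2 ha; positivity
  have key : ∀ t : ℝ, 0 ≤ t → t * ‖star a * a‖ ≤ ‖(r : ℂ) • (1 : 𝒜)‖ := by
    intro t ht
    obtain ⟨w, hw⟩ := h t ht
    have h1 : (t : ℂ) • (star a * a) ≤ (r : ℂ) • (1 : 𝒜) := by
      rw [← sub_nonneg, hw]; exact star_mul_self_nonneg _
    have h2 : 0 ≤ (t : ℂ) • (star a * a) := by
      rw [Complex.coe_smul]; exact smul_nonneg ht (star_mul_self_nonneg _)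
    have := CStarAlgebra.norm_le_norm_of_nonneg_of_le h2 h1
    rwa [norm_smul, Complex.norm_real, Real.norm_of_nonneg ht] at this
  have := key ((‖(r : ℂ) • (1 : 𝒜)‖ + 1) / ‖star a * a‖) (by positivity)
  rw [div_mul_cancel₀ _ hpos.ne'] at this
  linarith

lemma continuous_of_positive {E : 𝒜 →ₗ[ℂ] 𝒜} (h : ∀ x, ∃ y, E (star x * x) = star y * y) :
    Continuous E := by
  let F : 𝒜 →ₚ[ℂ] 𝒜 := PositiveLinearMap.mk₀ E (by
    intro x hx
    obtain ⟨y, rfl⟩ := CStarAlgebra.nonneg_iff_eq_star_mul_self.1 hx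
    obtain ⟨w, hw⟩ := h y
    rw [hw]; exact star_mul_self_nonneg _)
  exact map_continuous F

/-- A self-adjoint element that is not a multiple of a projection can be split into two orthogonal
nonzero self-adjoint pieces by functional calculus. -/
lemma exists_split {c : 𝒜} (hc : star c = c) (hne : ∀ t : ℝ, c * c ≠ (t : ℂ) • c) :
    ∃ x y : 𝒜, star x = x ∧ star y = y ∧ x ≠ 0 ∧ y ≠ 0 ∧ x * y = 0 ∧ y * x = 0 ∧
      (∀ b, c * b = b * c → x * b = b * x) ∧ (∀ b, c * b = b * c → y * b = b * y) ∧
      (∀ b, c * b = 0 → x * b = 0) ∧ (∀ b, c * b = 0 → y * b = 0) := by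
  have hsa : IsSelfAdjoint c := hc
  have hspec : ∃ t ∈ spectrum ℝ c, ∃ t' ∈ spectrum ℝ c, t ≠ 0 ∧ t' ≠ 0 ∧ t < t' := by
    by_contra! hcon
    have : ∃ t : ℝ, ∀ x ∈ spectrum ℝ c, x * x = t * x := by
      by_cases h0 : ∃ t ∈ spectrum ℝ c, t ≠ 0
      · obtain ⟨t, ht, ht0⟩ := h0
        refine ⟨t, fun x hx => ?_⟩
        by_cases hx0 : x = 0
        · simp [hx0]
        · have h1 := hcon t ht x hx ht0 hx0
          have h2 := hcon x hx t ht hx0 ht0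
          rw [le_antisymm h1 h2]
      · push Not at h0
        exact ⟨0, fun x hx => by simp [h0 x hx]⟩
    obtain ⟨t, ht⟩ := this
    apply hne t
    have e1 : cfc (fun x : ℝ => x * x) c = c * c := by
      rw [cfc_mul (fun x : ℝ => x) (fun x => x) c, cfc_id' ℝ c]
    have e2 : cfc (fun x : ℝ => t * x) c = (t : ℂ) • c := by
      rw [cfc_const_mul_id t c, Complex.coe_smul]
    rw [← e1, ← e2]
    exact cfc_congr ht
  obtain ⟨t, ht, t', ht', ht0, ht'0, hlt⟩ := hspec
  set m := (t + t') / 2 with hm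
  -- cut the identity function at the midpoint
  let f : ℝ → ℝ := fun x => max 0 (x - m)
  let g : ℝ → ℝ := fun x => max 0 (m - x)
  have hf : Continuous f := by fun_prop
  have hg : Continuous g := by fun_prop
  have split : ∀ k : ℝ → ℝ, Continuous k → cfc (fun x => k x * x) c = cfc k c * c := by
    intro k hk
    rw [cfc_mul k (fun x => x) c hk.continuousOn (by fun_prop), cfc_id' ℝ c]
  have comm : ∀ k : ℝ → ℝ, ∀ b, c * b = b * c → cfc k c * b = b * cfc k c := by
    intro k b hb
    exact Commute.cfc_real (show Commute c b from hb) k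
  have prodzero : ∀ x, (f x * x) * (g x * x) = 0 := by
    intro x
    rcases le_total x m with h | h
    · have : f x = 0 := max_eq_left (by linarith)
      simp [this]
    · have : g x = 0 := max_eq_left (by linarith)
      simp [this]
  have nz : ∀ k : ℝ → ℝ, Continuous k → ∀ s ∈ spectrum ℝ c, k s * s ≠ 0 →
      cfc (fun x => k x * x) c ≠ 0 := by
    intro k hk s hs hks h0
    have : k s * s ∈ spectrum ℝ (cfc (fun x => k x * x) c) := by
      rw [cfc_map_spectrum (R := ℝ) (fun x => k x * x) c (hf := by fun_prop)]
      exact ⟨s, hs, rfl⟩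
    rw [h0] at this
    have hnt : Nontrivial 𝒜 := by
      by_contra hn
      rw [not_nontrivial_iff_subsingleton] at hn
      simp [spectrum.of_subsingleton] at hs
    rw [spectrum.zero_eq] at this
    exact hks this
  refine ⟨cfc (fun x => f x * x) c, cfc (fun x => g x * x) c, cfc_predicate (R := ℝ) _ c,
    cfc_predicate (R := ℝ) _ c, nz f hf t' ht' ?_, nz g hg t ht ?_, ?_, ?_, comm _, comm _, ?_, ?_⟩
  · refine mul_ne_zero ?_ ht'0
    have : 0 < f t' := lt_max_of_lt_right (by rw [hm]; linarith)
    exact this.ne'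
  · refine mul_ne_zero ?_ ht0
    have : 0 < g t := lt_max_of_lt_right (by rw [hm]; linarith)
    exact this.ne'
  · rw [← cfc_mul _ _ c (by fun_prop) (by fun_prop)]
    simp only [prodzero]; exact cfc_const_zero ℝ c
  · rw [← cfc_mul _ _ c (by fun_prop) (by fun_prop)]
    simp only [mul_comm (g _ * _), prodzero]; exact cfc_const_zero ℝ c
  · intro b hb; rw [split f hf, mul_assoc, hb, mul_zero]
  · intro b hb; rw [split g hg, mul_assoc, hb, mul_zero]
end Analytic

/-! ### The normalizer, conditional expectations and Bessel's identity -/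

section Algebra
variable {𝒜 : Type*} [CStarAlgebra 𝒜]

/-- The relative commutant of `B`, as a star subalgebra. -/
def commutant (B : StarSubalgebra ℂ 𝒜) : StarSubalgebra ℂ 𝒜 :=
  StarSubalgebra.centralizer ℂ (B : Set 𝒜)

lemma mem_commutant {B : StarSubalgebra ℂ 𝒜} {x : 𝒜} :
    x ∈ commutant B ↔ ∀ b ∈ B, x * b = b * x := by
  rw [commutant, StarSubalgebra.mem_centralizer_iff]
  constructor
  · intro h b hb; exact ((h b hb).1).symm
  · intro h b hb; exact ⟨(h b hb).symm, (h _ (star_mem hb)).symm⟩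

lemma mem_normalizer {B : StarSubalgebra ℂ 𝒜} {u : 𝒜} :
    u ∈ normalizer (B : Set 𝒜) ↔ u ∈ unitary 𝒜 ∧ (∀ b ∈ B, u * b * star u ∈ B) ∧
      (∀ b ∈ B, star u * b * u ∈ B) := by
  constructor
  · rintro ⟨hu, h⟩
    refine ⟨hu, fun b hb => ?_, fun b hb => ?_⟩
    · have : u * b * star u ∈ (fun x => u * x * star u) '' (B : Set 𝒜) := ⟨b, hb, rfl⟩
      rw [h] at this; exact this
    · have hb' : b ∈ (fun x => u * x * star u) '' (B : Set 𝒜) := by rw [h]; exact hb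
      obtain ⟨x, hx, rfl⟩ := hb'
      have : star u * (u * x * star u) * u = x := by
        simp only [mul_assoc, Unitary.star_mul_self_of_mem hu, mul_one]
        rw [← mul_assoc, Unitary.star_mul_self_of_mem hu, one_mul]
      simpa [this] using hx
  · rintro ⟨hu, h1, h2⟩
    refine ⟨hu, Set.Subset.antisymm ?_ ?_⟩
    · rintro _ ⟨x, hx, rfl⟩; exact h1 x hx
    · intro b hb
      refine ⟨star u * b * u, h2 b hb, ?_⟩
      simp only [mul_assoc, Unitary.mul_star_self_of_mem hu, mul_one]
      rw [← mul_assoc, Unitary.mul_star_self_of_mem hu, one_mul]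

/-- The normalizer of `B`, as a submonoid. -/
def normalizerMonoid (B : StarSubalgebra ℂ 𝒜) : Submonoid 𝒜 where
  carrier := normalizer (B : Set 𝒜)
  one_mem' := by
    rw [mem_normalizer]; refine ⟨one_mem _, ?_, ?_⟩ <;> simp
  mul_mem' := by
    intro u v hu hv
    rw [mem_normalizer] at *
    refine ⟨mul_mem hu.1 hv.1, fun b hb => ?_, fun b hb => ?_⟩
    · have := hu.2.1 _ (hv.2.1 b hb)
      simpa [mul_assoc] using this
    · have := hv.2.2 _ (hu.2.2 b hb)
      simpa [mul_assoc] using this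

lemma mem_NM {B : StarSubalgebra ℂ 𝒜} {u : 𝒜} :
    u ∈ normalizerMonoid B ↔ u ∈ unitary 𝒜 ∧ (∀ b ∈ B, u * b * star u ∈ B) ∧
      (∀ b ∈ B, star u * b * u ∈ B) := mem_normalizer

lemma star_mem_NM {B : StarSubalgebra ℂ 𝒜} {u : 𝒜} (hu : u ∈ normalizerMonoid B) :
    star u ∈ normalizerMonoid B := by
  rw [mem_NM] at *
  refine ⟨Unitary.star_mem hu.1, ?_, ?_⟩
  · simpa using hu.2.2
  · simpa using hu.2.1

lemma NM_star_mul {B : StarSubalgebra ℂ 𝒜} {u : 𝒜} (hu : u ∈ normalizerMonoid B) :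
    star u * u = 1 := Unitary.star_mul_self_of_mem (mem_NM.1 hu).1

lemma NM_mul_star {B : StarSubalgebra ℂ 𝒜} {u : 𝒜} (hu : u ∈ normalizerMonoid B) :
    u * star u = 1 := Unitary.mul_star_self_of_mem (mem_NM.1 hu).1

lemma NM_star_mul_assoc {B : StarSubalgebra ℂ 𝒜} {u : 𝒜} (hu : u ∈ normalizerMonoid B) (x : 𝒜) :
    star u * (u * x) = x := by rw [← mul_assoc, NM_star_mul hu, one_mul]

lemma NM_mul_star_assoc {B : StarSubalgebra ℂ 𝒜} {u : 𝒜} (hu : u ∈ normalizerMonoid B) (x : 𝒜) :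
    u * (star u * x) = x := by rw [← mul_assoc, NM_mul_star hu, one_mul]

lemma conj_mem_commutant {B : StarSubalgebra ℂ 𝒜} {u c : 𝒜} (hu : u ∈ normalizerMonoid B)
    (hc : c ∈ commutant B) : u * c * star u ∈ commutant B := by
  rw [mem_commutant] at *
  intro b hb
  have h := hc _ ((mem_NM.1 hu).2.2 b hb)
  calc u * c * star u * b = u * (c * (star u * b * u)) * star u := by
        simp only [mul_assoc, NM_mul_star hu, mul_one]
    _ = b * (u * c * star u) := by
        rw [h]; simp only [mul_assoc, NM_mul_star_assoc hu]

lemma conj_mem_commutant' {B : StarSubalgebra ℂ 𝒜} {u c : 𝒜} (hu : u ∈ normalizerMonoid B)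
    (hc : c ∈ commutant B) : star u * c * u ∈ commutant B := by
  simpa using conj_mem_commutant (star_mem_NM hu) hc

/-- Schur's lemma: central elements of a simple unital C⋆-algebra are scalar, because `z - t` with
`t` in the spectrum of `z` generates a proper closed ideal. -/
lemma scalar_of_central [Nontrivial 𝒜] {S : StarSubalgebra ℂ 𝒜} (hcl : IsClosed (S : Set 𝒜))
    (hs : IsSimpleCStar (S : Set 𝒜)) {z : 𝒜} (hz : z ∈ S) (hc : ∀ b ∈ S, z * b = b * z) :
    ∃ t : ℂ, z = t • 1 := by
  obtain ⟨t, ht⟩ := spectrum.nonempty z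
  refine ⟨t, ?_⟩
  set d : 𝒜 := z - t • 1 with hd
  have hdS : d ∈ S := sub_mem hz (SMulMemClass.smul_mem t (one_mem S))
  have hdc : ∀ b ∈ S, d * b = b * d := by
    intro b hb; simp [hd, sub_mul, mul_sub, hc b hb]
  have hnu : ¬ IsUnit d := by
    intro h
    apply ht
    have : algebraMap ℂ 𝒜 t - z = -d := by rw [hd, Algebra.algebraMap_eq_smul_one]; abel
    rw [spectrum.mem_resolventSet_iff, this]; exact h.neg
  let K : Set 𝒜 := (fun b => d * b) '' (S : Set 𝒜)
  have hKS : K ⊆ S := by rintro _ ⟨b, hb, rfl⟩; exact mul_mem hdS hb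
  have hK := hs (closure K) (closure_minimal hKS hcl) isClosed_closure
    (subset_closure ⟨0, zero_mem S, mul_zero _⟩) ?_ ?_
  · rcases hK with h | h
    · have : d * 1 ∈ closure K := subset_closure ⟨1, one_mem S, rfl⟩
      rw [h, mul_one] at this
      exact sub_eq_zero.1 this
    · exfalso
      have h1 : (1 : 𝒜) ∈ closure K := by rw [h]; exact one_mem S
      obtain ⟨_, ⟨b, hb, rfl⟩, hlt⟩ := Metric.mem_closure_iff.1 h1 1 one_pos
      have hu : IsUnit (d * b) := by
        have := isUnit_one_sub_of_norm_lt_one (x := 1 - d * b) (by rwa [← dist_eq_norm])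
        simpa using this
      have hcm : Commute d b := hdc b hb
      exact hnu (hcm.isUnit_mul_iff.1 hu).1
  · intro x hx y hy
    refine map_mem_closure₂ continuous_add hx hy ?_
    rintro _ ⟨b, hb, rfl⟩ _ ⟨b', hb', rfl⟩
    exact ⟨b + b', add_mem hb hb', mul_add _ _ _⟩
  · intro x hx b hb
    constructor
    · refine map_mem_closure (f := fun y => y * b) (continuous_mul_const b) hx ?_
      rintro _ ⟨b', hb', rfl⟩
      exact ⟨b' * b, mul_mem hb' hb, by simp [mul_assoc]⟩
    · refine map_mem_closure (f := fun y => b * y) (continuous_const_mul b) hx ?_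
      rintro _ ⟨b', hb', rfl⟩
      exact ⟨b * b', mul_mem hb hb', by
        simp only [← mul_assoc]; rw [hdc b hb]⟩

variable {B : StarSubalgebra ℂ 𝒜} {E : 𝒜 →ₗ[ℂ] 𝒜}

lemma IsCondExp.mem (h : IsCondExp (B : Set 𝒜) E) (x : 𝒜) : E x ∈ B := h.1 x

lemma IsCondExp.mul_left (h : IsCondExp (B : Set 𝒜) E) {b : 𝒜} (hb : b ∈ B) (x : 𝒜) :
    E (b * x) = b * E x := by
  simpa using h.2.2.2 b hb 1 (one_mem B) x

lemma IsCondExp.mul_right (h : IsCondExp (B : Set 𝒜) E) {b : 𝒜} (hb : b ∈ B) (x : 𝒜) :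
    E (x * b) = E x * b := by
  simpa using h.2.2.2 1 (one_mem B) b hb x

lemma IsCondExp.one (h : IsCondExp (B : Set 𝒜) E) : E 1 = 1 := h.2.1 1 (one_mem B)

lemma IsCondExp.star_apply (h : IsCondExp (B : Set 𝒜) E) (x : 𝒜) : E (star x) = star (E x) := by
  have hpos : ∀ y, star (E (star y * y)) = E (star y * y) := by
    intro y; obtain ⟨w, hw⟩ := h.2.2.1 y; rw [hw]; simp
  have hsa : ∀ y, star y = y → star (E y) = E y := by
    intro y hy
    have h1 := hpos (y + 1)
    have h2 := hpos (y - 1)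
    have : y = (1 / 4 : ℂ) • (star (y + 1) * (y + 1) - star (y - 1) * (y - 1)) := by
      rw [star_add, star_sub, hy, star_one]
      have : (y + 1) * (y + 1) - (y - 1) * (y - 1) = (4 : ℂ) • y := by
        rw [show (4 : ℂ) • y = y + y + y + y by rw [show (4 : ℂ) = 1 + 1 + 1 + 1 by norm_num]; simp only [add_smul, one_smul]]
        noncomm_ring
      rw [this, smul_smul]; norm_num
    rw [this, map_smul, map_sub, star_smul, star_sub, h1, h2]; simp
  have hx : x = (realPart x : 𝒜) + Complex.I • (imaginaryPart x : 𝒜) := (realPart_add_I_smul_imaginaryPart x).symm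
  have hr := hsa _ (realPart x).2
  have hi := hsa _ (imaginaryPart x).2
  have hr' : star (realPart x : 𝒜) = realPart x := (realPart x).2
  have hi' : star (imaginaryPart x : 𝒜) = imaginaryPart x := (imaginaryPart x).2
  rw [hx]
  simp only [star_add, star_smul, map_add, map_smul, hr, hi, hr', hi']

lemma IsCondExp.continuous (h : IsCondExp (B : Set 𝒜) E) : Continuous E :=
  continuous_of_positive h.2.2.1

lemma IsCondExp.scalar_of_mem_commutant [Nontrivial 𝒜] (h : IsCondExp (B : Set 𝒜) E)
    (hcl : IsClosed (B : Set 𝒜)) (hs : IsSimpleCStar (B : Set 𝒜)) {c : 𝒜}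
    (hc : c ∈ commutant B) : ∃ t : ℂ, E c = t • 1 := by
  refine scalar_of_central hcl hs (h.mem c) fun b hb => ?_
  rw [← h.mul_right hb, ← h.mul_left hb, mem_commutant.1 hc b hb]

lemma IsRightQB.expand {n : ℕ} {l : Fin n → 𝒜} (h : IsCondExp (B : Set 𝒜) E) (hl : IsRightQB E l)
    (x : 𝒜) : ∑ k, l k * E (star (l k) * x) = x := by
  have := congrArg star (hl (star x))
  rw [star_star, star_sum] at this
  conv_rhs => rw [this]
  refine Finset.sum_congr rfl fun k _ => ?_
  rw [star_mul, star_star, ← h.star_apply]; simp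

/-- Bessel's identity: the defect of a finite family `v` with respect to the quasi-basis `l`. -/
lemma bessel {n : ℕ} {l : Fin n → 𝒜} (h : IsCondExp (B : Set 𝒜) E) (hl : IsRightQB E l)
    {ι : Type*} [Fintype ι] (v : ι → 𝒜) :
    ∑ k, (l k - ∑ i, v i * E (star (v i) * l k)) * star (l k - ∑ i, v i * E (star (v i) * l k))
      = ∑ k, l k * star (l k) - (2 : ℂ) • ∑ i, v i * star (v i)
        + ∑ i, ∑ j, v i * E (star (v i) * v j) * star (v j) := by
  have hst : ∀ i k, star (E (star (v i) * l k)) = E (star (l k) * v i) := by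
    intro i k; rw [← h.star_apply]; simp
  have e1 : ∑ k, (∑ i, v i * E (star (v i) * l k)) * star (l k) = ∑ i, v i * star (v i) := by
    simp only [Finset.sum_mul]
    rw [Finset.sum_comm]
    refine Finset.sum_congr rfl fun i _ => ?_
    conv_rhs => rw [hl (star (v i)), Finset.mul_sum]
    simp only [mul_assoc]
  have e2 : ∑ k, l k * star (∑ i, v i * E (star (v i) * l k)) = ∑ i, v i * star (v i) := by
    have := congrArg star e1
    simpa [star_sum] using this
  have e3 : ∑ k, (∑ i, v i * E (star (v i) * l k)) * star (∑ i, v i * E (star (v i) * l k))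
      = ∑ i, ∑ j, v i * E (star (v i) * v j) * star (v j) := by
    simp only [star_sum, star_mul, hst, Finset.sum_mul_sum]
    rw [Finset.sum_comm]
    refine Finset.sum_congr rfl fun i _ => ?_
    rw [Finset.sum_comm]
    refine Finset.sum_congr rfl fun j _ => ?_
    have : E (star (v i) * v j) = ∑ k, E (star (v i) * l k) * E (star (l k) * v j) := by
      conv_lhs => rw [hl (star (v i)), Finset.sum_mul, map_sum]
      refine Finset.sum_congr rfl fun k _ => ?_
      rw [mul_assoc, h.mul_left (h.mem _)]
    rw [this, Finset.mul_sum, Finset.sum_mul]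
    simp only [mul_assoc]
  simp only [star_sub, mul_sub, sub_mul, Finset.sum_sub_distrib, e1, e2, e3]
  rw [two_smul]; abel

lemma bessel_pos {n : ℕ} {l : Fin n → 𝒜} (h : IsCondExp (B : Set 𝒜) E) (hl : IsRightQB E l)
    {ι : Type*} [Fintype ι] (v : ι → 𝒜) :
    ∃ w, ∑ k, l k * star (l k) - (2 : ℂ) • ∑ i, v i * star (v i)
        + ∑ i, ∑ j, v i * E (star (v i) * v j) * star (v j) = star w * w := by
  obtain ⟨w, hw⟩ := exists_star_mul_self_sum Finset.univ
    (fun k => star (l k - ∑ i, v i * E (star (v i) * l k)))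
  refine ⟨w, ?_⟩
  rw [← bessel h hl v, ← hw]; simp only [star_star]

/-- A conditional expectation of scalar index is faithful. -/
lemma faithful {n : ℕ} {l : Fin n → 𝒜} {r : ℝ} (h : IsCondExp (B : Set 𝒜) E) (hl : IsRightQB E l)
    (hr : ∑ i, l i * star (l i) = (r : ℂ) • 1) {x : 𝒜} (hx : E (star x * x) = 0) : x = 0 := by
  rw [← star_eq_zero]
  refine eq_zero_of_bounded_multiples (r := r) fun t ht => ?_
  obtain ⟨q, hq⟩ : ∃ q : ℝ, 2 * (q * q) = t :=
    ⟨Real.sqrt (t / 2), by rw [Real.mul_self_sqrt (by positivity)]; ring⟩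
  obtain ⟨w, hw⟩ := bessel_pos h hl (fun _ : Unit => (q : ℂ) • x)
  refine ⟨w, ?_⟩
  have h2 : (2 : ℂ) * ((q : ℂ) * (q : ℂ)) = t := by rw [← hq]; push_cast; rfl
  have hqs : star (q : ℂ) = q := by simp
  rw [← hw, hr, ← h2]
  simp only [star_smul, hqs, smul_mul_smul_comm, map_smul, hx, smul_zero, mul_zero, zero_mul,
    Finset.sum_const_zero, add_zero, Finset.univ_unique, Finset.sum_singleton, smul_smul,
    star_star]

/-- An orthonormal family of a conditional expectation with index `r` satisfies
`∑ vᵢ vᵢ* ≤ r`. -/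
lemma orthonormal_pos {n : ℕ} {l : Fin n → 𝒜} {r : ℝ} (h : IsCondExp (B : Set 𝒜) E)
    (hl : IsRightQB E l) (hr : ∑ i, l i * star (l i) = (r : ℂ) • 1)
    {ι : Type*} [Fintype ι] [DecidableEq ι] (v : ι → 𝒜)
    (hv : ∀ i j, E (star (v i) * v j) = if i = j then 1 else 0) :
    ∃ w, (r : ℂ) • 1 - ∑ i, v i * star (v i) = star w * w := by
  obtain ⟨w, hw⟩ := bessel_pos h hl v
  refine ⟨w, ?_⟩
  rw [← hw, hr]
  simp only [hv, mul_ite, mul_one, mul_zero, ite_mul, zero_mul, Finset.sum_ite_eq, Finset.mem_univ,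
    if_true]
  rw [two_smul]; abel

lemma card_le_of_unitary [Nontrivial 𝒜] {n : ℕ} {l : Fin n → 𝒜} {r : ℝ}
    (h : IsCondExp (B : Set 𝒜) E)
    (hl : IsRightQB E l) (hr : ∑ i, l i * star (l i) = (r : ℂ) • 1)
    {ι : Type*} [Fintype ι] [DecidableEq ι] (v : ι → 𝒜) (hu : ∀ i, v i * star (v i) = 1)
    (hv : ∀ i j, E (star (v i) * v j) = if i = j then 1 else 0) : (Fintype.card ι : ℝ) ≤ r := by
  obtain ⟨w, hw⟩ := orthonormal_pos h hl hr v hv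
  have : ((r : ℂ) - (Fintype.card ι : ℂ)) • (1 : 𝒜) = star w * w := by
    rw [← hw]; simp [hu, sub_smul, Nat.cast_smul_eq_nsmul]
  have := (scalar_nonneg this).1
  simpa using this

/-- Pairwise orthogonal nonzero self-adjoint elements of the relative commutant are at most as many
as the index. -/
lemma card_le_of_orthogonal [Nontrivial 𝒜] {n : ℕ} {l : Fin n → 𝒜} {r : ℝ}
    (h : IsCondExp (B : Set 𝒜) E) (hl : IsRightQB E l)
    (hr : ∑ i, l i * star (l i) = (r : ℂ) • 1)
    (hcl : IsClosed (B : Set 𝒜)) (hs : IsSimpleCStar (B : Set 𝒜))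
    {ι : Type*} [Fintype ι] [DecidableEq ι] (a : ι → 𝒜) (hC : ∀ i, a i ∈ commutant B)
    (hsa : ∀ i, star (a i) = a i) (h0 : ∀ i, a i ≠ 0)
    (ho : ∀ i j, i ≠ j → a i * a j = 0) : (Fintype.card ι : ℝ) ≤ r := by
  have hex : ∀ i, ∃ s : ℝ, 0 < s ∧ E (a i * a i) = (s : ℂ) • 1 := by
    intro i
    obtain ⟨t, ht⟩ := h.scalar_of_mem_commutant hcl hs (mul_mem (hC i) (hC i))
    obtain ⟨y, hy⟩ := h.2.2.1 (a i)
    rw [hsa, ht] at hy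
    obtain ⟨h1, h2⟩ := scalar_nonneg hy
    have ht' : t = (t.re : ℂ) := Complex.ext rfl (by simpa using h2)
    refine ⟨t.re, lt_of_le_of_ne h1 fun h3 => h0 i ?_, by rw [ht, ← ht']⟩
    apply faithful h hl hr
    rw [hsa, ht, ht', ← h3]; simp
  choose s hs0 hs1 using hex
  let v : ι → 𝒜 := fun i => (((Real.sqrt (s i))⁻¹ : ℝ) : ℂ) • a i
  have hsq : ∀ i, (((Real.sqrt (s i))⁻¹ : ℝ) : ℂ) * (((Real.sqrt (s i))⁻¹ : ℝ) : ℂ) * (s i : ℂ) = 1 := by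
    intro i
    rw [← Complex.ofReal_mul, ← Complex.ofReal_mul, ← mul_inv, Real.mul_self_sqrt (hs0 i).le,
      inv_mul_cancel₀ (hs0 i).ne', Complex.ofReal_one]
  have hvv : ∀ i j, E (star (v i) * v j) = if i = j then 1 else 0 := by
    intro i j
    by_cases hij : i = j
    · subst hij
      have := hsq i
      simp only [v, star_smul, hsa, smul_mul_smul_comm, map_smul, hs1, smul_smul, if_true]
      simp only [Complex.star_def, Complex.conj_ofReal]
      rw [this, one_smul]
    · simp [v, hij, hsa, ho i j hij]
  obtain ⟨w, hw⟩ := orthonormal_pos h hl hr v hvv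
  obtain ⟨y, hy⟩ := h.2.2.1 w
  have hvs : ∀ i, v i * star (v i) = star (v i) * v i := by
    intro i; simp [v, hsa]
  have : ((r : ℂ) - (Fintype.card ι : ℂ)) • (1 : 𝒜) = star y * y := by
    rw [← hy, ← hw]; simp [hvs, hvv, sub_smul, Nat.cast_smul_eq_nsmul, h.one]
  have := (scalar_nonneg this).1
  simpa using this

/-- In contrapositive form: a conditional expectation vanishes on `u C` for a normalizing unitary `u`
outside `U(B) U(C)`, where `C` is the relative commutant. The element `b = E (u c)` intertwines the
identity and conjugation by `u` on `B`, so `b* b` and `b b*` are central in `B`, hence scalar, and a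
nonzero `b` is a multiple of a unitary. -/
lemma mem_UBC_of_ne_zero [Nontrivial 𝒜] (h : IsCondExp (B : Set 𝒜) E)
    (hcl : IsClosed (B : Set 𝒜)) (hs : IsSimpleCStar (B : Set 𝒜)) {u c : 𝒜}
    (hu : u ∈ normalizerMonoid B) (hc : c ∈ commutant B) (hne : E (u * c) ≠ 0) :
    ∃ b ∈ B, b ∈ unitary 𝒜 ∧ ∃ c' ∈ commutant B, u = b * c' := by
  set b := E (u * c) with hb
  have hbB : b ∈ B := h.mem _
  have inter : ∀ x ∈ B, b * x = u * x * star u * b := by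
    intro x hx
    rw [hb, ← h.mul_right hx, ← h.mul_left ((mem_NM.1 hu).2.1 x hx), mul_assoc,
      mem_commutant.1 hc x hx]
    simp only [mul_assoc, NM_star_mul_assoc hu]
  have inter' : ∀ x ∈ B, star b * (u * x * star u) = x * star b := by
    intro x hx
    have := congrArg star (inter (star x) (star_mem hx))
    simpa [mul_assoc] using this.symm
  obtain ⟨t, ht⟩ := scalar_of_central hcl hs (mul_mem (star_mem hbB) hbB) (z := star b * b) (by
    intro x hx
    rw [mul_assoc, inter x hx, ← mul_assoc, inter' x hx, mul_assoc])
  obtain ⟨t', ht'⟩ := scalar_of_central hcl hs (mul_mem hbB (star_mem hbB)) (z := b * star b) (by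
    intro x hx
    have hx' := (mem_NM.1 hu).2.2 x hx
    have e : u * (star u * x * u) * star u = x := by
      simp only [mul_assoc, NM_mul_star hu, mul_one, NM_mul_star_assoc hu]
    have h1 := inter' _ hx'
    have h2 := inter _ hx'
    rw [e] at h1 h2
    rw [mul_assoc, h1, ← mul_assoc, h2, mul_assoc])
  have htt : t = t' := by
    have : t • b = t' • b := by
      calc t • b = b * (star b * b) := by rw [ht]; simp
        _ = t' • b := by rw [← mul_assoc, ht']; simp
    exact smul_left_injective ℂ hne this
  subst htt
  obtain ⟨hre, him⟩ := scalar_nonneg ht.symm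
  have htr : t = (t.re : ℂ) := Complex.ext rfl (by simpa using him)
  have hpos : 0 < t.re := by
    refine lt_of_le_of_ne hre fun h3 => hne ?_
    rw [htr, ← h3] at ht
    simpa using ht
  set q : ℂ := (((Real.sqrt t.re)⁻¹ : ℝ) : ℂ) with hq
  have hqs : star q = q := by simp [hq]
  have hqq : q * q * t = 1 := by
    rw [hq, htr, ← Complex.ofReal_mul, Complex.ofReal_re, ← Complex.ofReal_mul, ← mul_inv,
      Real.mul_self_sqrt hre, inv_mul_cancel₀ hpos.ne', Complex.ofReal_one]
  have hv1 : star (q • b) * (q • b) = 1 := by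
    rw [star_smul, hqs, smul_mul_smul_comm, ht, smul_smul, hqq, one_smul]
  have hv2 : (q • b) * star (q • b) = 1 := by
    rw [star_smul, hqs, smul_mul_smul_comm, ht', smul_smul, hqq, one_smul]
  refine ⟨q • b, SMulMemClass.smul_mem q hbB, Unitary.mem_iff.2 ⟨hv1, hv2⟩,
    star (q • b) * u, ?_, ?_⟩
  · rw [mem_commutant]
    intro x hx
    have e : u * x = u * x * star u * u := by simp only [mul_assoc, NM_star_mul hu, mul_one]
    rw [mul_assoc, e, ← mul_assoc, star_smul, smul_mul_assoc, inter' x hx]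
    simp [mul_assoc]
  · rw [← mul_assoc, hv2, one_mul]
end Algebra

/-! ### Minimal projections and matrix blocks in the relative commutant -/

section Structure
variable {𝒜 : Type*} [CStarAlgebra 𝒜]

/-- `B` is a simple closed star subalgebra and `E` is a conditional expectation onto `B` of scalar
Watatani index `r`. -/
structure HasIndex (B : StarSubalgebra ℂ 𝒜) (E : 𝒜 →ₗ[ℂ] 𝒜) (r : ℝ) : Prop where
  closed : IsClosed (B : Set 𝒜)
  simple : IsSimpleCStar (B : Set 𝒜)
  exp : IsCondExp (B : Set 𝒜) E
  qb : ∃ (n : ℕ) (l : Fin n → 𝒜), IsRightQB E l ∧ ∑ i, l i * star (l i) = (r : ℂ) • 1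

variable {B : StarSubalgebra ℂ 𝒜} {E : 𝒜 →ₗ[ℂ] 𝒜} {r : ℝ}

lemma HasIndex.faithful (H : HasIndex B E r) {x : 𝒜} (hx : E (star x * x) = 0) : x = 0 := by
  obtain ⟨n, l, hl, hr⟩ := H.qb
  exact RegularInclusion.faithful H.exp hl hr hx

lemma HasIndex.card_le [Nontrivial 𝒜] (H : HasIndex B E r) {m : ℕ} (a : Fin m → 𝒜)
    (hC : ∀ i, a i ∈ commutant B)
    (hsa : ∀ i, star (a i) = a i) (h0 : ∀ i, a i ≠ 0)
    (ho : ∀ i j, i ≠ j → a i * a j = 0) : (m : ℝ) ≤ r := by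
  obtain ⟨n, l, hl, hr⟩ := H.qb
  simpa using card_le_of_orthogonal H.exp hl hr H.closed H.simple a hC hsa h0 ho

/-- A family satisfying `P` of bounded size can be chosen so that its size cannot be increased by
one. -/
lemma exists_last (P : ℕ → Prop) {r : ℝ} (hP : ∀ m, P m → (m : ℝ) ≤ r) {m₀ : ℕ} (h0 : P m₀) :
    ∃ M, m₀ ≤ M ∧ P M ∧ ¬ P (M + 1) := by
  by_contra! hcon
  have : ∀ j, P (m₀ + j) := by
    intro j
    induction j with
    | zero => exact h0
    | succ j ih => exact hcon _ (Nat.le_add_right _ _) ih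
  obtain ⟨N, hN⟩ := exists_nat_gt r
  have := hP _ (this N)
  push_cast at this
  have h1 : (0 : ℝ) ≤ m₀ := Nat.cast_nonneg _
  linarith

/-- The relative commutant contains a minimal projection. In a largest family of nonzero orthogonal
self-adjoint elements no member can be split into two orthogonal ones, so by `exists_split` the
members are multiples of projections. -/
lemma HasIndex.exists_minimal [Nontrivial 𝒜] (H : HasIndex B E r) :
    ∃ p ∈ commutant B, star p = p ∧ p * p = p ∧ p ≠ 0 ∧
      ∀ c ∈ commutant B, ∃ t : ℂ, p * c * p = t • p := by
  obtain ⟨M, hM, ⟨a, hC, hsa, h0, ho⟩, hlast⟩ := exists_last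
    (fun m => ∃ a : Fin m → 𝒜, (∀ i, a i ∈ commutant B) ∧ (∀ i, star (a i) = a i) ∧
      (∀ i, a i ≠ 0) ∧ ∀ i j, i ≠ j → a i * a j = 0)
    (r := r) (fun m ⟨a, hC, hsa, h0, ho⟩ => H.card_le a hC hsa h0 ho) (m₀ := 1)
    ⟨fun _ => 1, fun _ => one_mem _, fun _ => star_one _, fun _ => one_ne_zero, fun i j hij =>
      absurd (Subsingleton.elim i j) hij⟩
  obtain ⟨K, rfl⟩ : ∃ K, M = K + 1 := ⟨M - 1, by omega⟩
  -- self-adjoint elements orthogonal to all members of the family but the first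
  let R : 𝒜 → Prop := fun c => c ∈ commutant B ∧ star c = c ∧ ∀ j : Fin K, c * a j.succ = 0
  have nosplit : ∀ x y, R x → R y → x * y = 0 → x = 0 ∨ y = 0 := by
    intro x y hx hy hxy
    by_contra! hcon
    have hyx : y * x = 0 := by
      have := congrArg star hxy
      simpa [hx.2.1, hy.2.1] using this
    have hl : ∀ c, R c → ∀ j : Fin K, a j.succ * c = 0 := by
      intro c hc j
      have := congrArg star (hc.2.2 j)
      simpa [hc.2.1, hsa] using this
    refine hlast ⟨Fin.cons x (Fin.cons y (fun j : Fin K => a j.succ)), ?_, ?_, ?_, ?_⟩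
    · intro i
      refine Fin.cases ?_ (fun i => Fin.cases ?_ (fun i => ?_) i) i
      · exact hx.1
      · exact hy.1
      · exact hC _
    · intro i
      refine Fin.cases ?_ (fun i => Fin.cases ?_ (fun i => ?_) i) i
      · exact hx.2.1
      · exact hy.2.1
      · exact hsa _
    · intro i
      refine Fin.cases ?_ (fun i => Fin.cases ?_ (fun i => ?_) i) i
      · exact hcon.1
      · exact hcon.2
      · exact h0 _
    · intro i j
      refine Fin.cases ?_ (fun i => Fin.cases ?_ (fun i => ?_) i) i <;>
      refine Fin.cases ?_ (fun j => Fin.cases ?_ (fun j => ?_) j) j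
      · intro h; exact absurd rfl h
      · intro _; exact hxy
      · intro _; exact hx.2.2 j
      · intro _; exact hyx
      · intro h; exact absurd rfl h
      · intro _; exact hy.2.2 j
      · intro _; exact hl x hx i
      · intro _; exact hl y hy i
      · intro h
        exact ho i.succ j.succ (fun h' => h (congrArg Fin.succ h'))
  have sq : ∀ c, R c → ∃ t : ℝ, c * c = (t : ℂ) • c := by
    intro c hc
    by_contra! hne
    obtain ⟨x, y, hxs, hys, hx0, hy0, hxy, -, hxc, hyc, hxz, hyz⟩ := exists_split hc.2.1 hne
    have hb := mem_commutant.1 hc.1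
    rcases nosplit x y
      ⟨mem_commutant.2 fun b hb' => hxc b (hb b hb'), hxs, fun j => hxz _ (hc.2.2 j)⟩
      ⟨mem_commutant.2 fun b hb' => hyc b (hb b hb'), hys, fun j => hyz _ (hc.2.2 j)⟩ hxy with h | h
    · exact hx0 h
    · exact hy0 h
  have ha0 : R (a 0) := ⟨hC 0, hsa 0, fun j => ho _ _ (Fin.succ_ne_zero j).symm⟩
  have Rsmul : ∀ (t : ℝ) c, R c → R ((t : ℂ) • c) := by
    intro t c hc
    refine ⟨SMulMemClass.smul_mem _ hc.1, ?_, fun j => ?_⟩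
    · rw [star_smul, hc.2.1]; simp
    · rw [smul_mul_assoc, hc.2.2 j, smul_zero]
  have proj : ∀ c, R c → c = 0 ∨ ∃ (t : ℝ) (q : 𝒜), R q ∧ q * q = q ∧ q ≠ 0 ∧ c = (t : ℂ) • q ∧
      q = ((t⁻¹ : ℝ) : ℂ) • c := by
    intro c hc
    by_cases hc0 : c = 0
    · exact Or.inl hc0
    right
    obtain ⟨t, ht⟩ := sq c hc
    have ht0 : t ≠ 0 := by
      rintro rfl
      apply hc0
      apply CStarRing.star_mul_self_eq_zero_iff c |>.1
      rw [hc.2.1, ht]; simp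
    have htc : (t : ℂ) ≠ 0 := by exact_mod_cast ht0
    refine ⟨t, ((t⁻¹ : ℝ) : ℂ) • c, Rsmul _ _ hc, ?_, ?_, ?_, rfl⟩
    · rw [smul_mul_smul_comm, ht, smul_smul]; push_cast
      rw [mul_assoc, inv_mul_cancel₀ htc, mul_one]
    · refine smul_ne_zero ?_ hc0
      push_cast; exact inv_ne_zero htc
    · rw [smul_smul]; push_cast; rw [mul_inv_cancel₀ htc, one_smul]
  obtain h | ⟨-, p, hp, hpp, hp0, -, -⟩ := proj _ ha0
  · exact absurd h (h0 0)
  refine ⟨p, hp.1, hp.2.1, hpp, hp0, ?_⟩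
  have key : ∀ c ∈ commutant B, star c = c → ∃ t : ℂ, p * c * p = t • p := by
    intro c hc hcs
    have hR : R (p * c * p) := by
      refine ⟨mul_mem (mul_mem hp.1 hc) hp.1, by simp [hp.2.1, hcs, mul_assoc], fun j => ?_⟩
      rw [mul_assoc, hp.2.2 j, mul_zero]
    obtain h | ⟨t, q, hq, hqq, hq0, hc', hq'⟩ := proj _ hR
    · exact ⟨0, by simp [h]⟩
    · refine ⟨t, ?_⟩
      rw [hc']
      have hqp : q * p = q := by
        rw [hq', smul_mul_assoc, mul_assoc, hpp]
      have hpq : p - q = 0 := by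
        refine (nosplit q (p - q) hq ⟨sub_mem hp.1 hq.1, ?_, fun j => ?_⟩ ?_).resolve_left hq0
        · rw [star_sub, hp.2.1, hq.2.1]
        · rw [sub_mul, hp.2.2 j, hq.2.2 j, sub_zero]
        · rw [mul_sub, hqp, hqq, sub_self]
      rw [sub_eq_zero.1 hpq]
  intro c hc
  have hre : (realPart c : 𝒜) ∈ commutant B := by
    rw [realPart_apply_coe]
    rw [← Complex.coe_smul]
    exact SMulMemClass.smul_mem _ (add_mem hc (star_mem hc))
  have him : (imaginaryPart c : 𝒜) ∈ commutant B := by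
    rw [imaginaryPart_apply_coe]
    rw [← Complex.coe_smul]
    exact SMulMemClass.smul_mem _ (SMulMemClass.smul_mem _ (sub_mem hc (star_mem hc)))
  obtain ⟨t1, h1⟩ := key _ hre (realPart c).2
  obtain ⟨t2, h2⟩ := key _ him (imaginaryPart c).2
  refine ⟨t1 + Complex.I * t2, ?_⟩
  conv_lhs => rw [← realPart_add_I_smul_imaginaryPart c]
  rw [mul_add, add_mul, h1, mul_smul_comm, smul_mul_assoc, h2, smul_smul, add_smul]

/-- A system of partial isometries in the relative commutant with common initial projection a
minimal projection `p`, whose range projections sum to a central projection of the relative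
commutant. -/
structure IsBlock (B : StarSubalgebra ℂ 𝒜) {n : ℕ} (p : 𝒜) (f : Fin n → 𝒜) : Prop where
  p_mem : p ∈ commutant B
  p_star : star p = p
  p_idem : p * p = p
  p_ne : p ≠ 0
  p_min : ∀ c ∈ commutant B, ∃ t : ℂ, p * c * p = t • p
  mem : ∀ i, f i ∈ commutant B
  mul_p : ∀ i, f i * p = f i
  star_mul : ∀ i j, star (f i) * f j = if i = j then p else 0
  maximal : ∀ c ∈ commutant B, ∀ i, (1 - ∑ j, f j * star (f j)) * c * f i = 0

/-- A largest family of partial isometries with orthogonal ranges and minimal initial projection `p`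
is a block: a nonzero `(1 - z) c (f i)`, where `z` is the sum of the ranges, would extend it after
scaling. -/
lemma HasIndex.exists_block [Nontrivial 𝒜] (H : HasIndex B E r) :
    ∃ (n : ℕ) (p : 𝒜) (f : Fin n → 𝒜), 1 ≤ n ∧ IsBlock B p f := by
  obtain ⟨p, hpC, hps, hpp, hp0, hmin⟩ := H.exists_minimal
  have hbd : ∀ m : ℕ, (∃ f : Fin m → 𝒜, (∀ i, f i ∈ commutant B) ∧ (∀ i, f i * p = f i) ∧
      ∀ i j, star (f i) * f j = if i = j then p else 0) → (m : ℝ) ≤ r := by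
    rintro m ⟨f, hfC, hfp, hff⟩
    refine H.card_le (fun i => f i * star (f i)) (fun i => mul_mem (hfC i) (star_mem (hfC i)))
      (fun i => by simp) (fun i h => hp0 ?_) (fun i j hij => ?_)
    · calc p = (star (f i) * f i) * (star (f i) * f i) := by rw [hff, if_pos rfl, hpp]
        _ = star (f i) * (f i * star (f i)) * f i := by simp only [mul_assoc]
        _ = 0 := by rw [h]; simp
    · calc f i * star (f i) * (f j * star (f j)) = f i * (star (f i) * f j) * star (f j) := by
            simp only [mul_assoc]
        _ = 0 := by rw [hff, if_neg hij]; simp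
  obtain ⟨n, hn, ⟨f, hfC, hfp, hff⟩, hlast⟩ := exists_last
    (fun m => ∃ f : Fin m → 𝒜, (∀ i, f i ∈ commutant B) ∧ (∀ i, f i * p = f i) ∧
      ∀ i j, star (f i) * f j = if i = j then p else 0)
    (r := r) hbd (m₀ := 1) ⟨fun _ => p, fun _ => hpC, fun _ => hpp, fun i j => by
      rw [if_pos (Subsingleton.elim i j), hps, hpp]⟩
  refine ⟨n, p, f, hn, hpC, hps, hpp, hp0, hmin, hfC, hfp, hff, ?_⟩
  intro c hc i
  by_contra hx0
  set z := ∑ j, f j * star (f j) with hz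
  have hzC : z ∈ commutant B := sum_mem fun j _ => mul_mem (hfC j) (star_mem (hfC j))
  set x := (1 - z) * c * f i with hx
  have hxC : x ∈ commutant B := mul_mem (mul_mem (sub_mem (one_mem _) hzC) hc) (hfC i)
  have hxp : x * p = x := by rw [hx, mul_assoc, hfp]
  have hpx : p * star x = star x := by
    have := congrArg star hxp
    simpa [hps] using this
  obtain ⟨t, ht⟩ := hmin _ (mul_mem (star_mem hxC) hxC)
  have ht' : star x * x = t • p := by
    rw [← ht, ← mul_assoc p (star x) x, hpx, mul_assoc (star x) x p, hxp]
  -- the scalar `t` is positive: apply `E`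
  obtain ⟨tp, htp⟩ := H.exp.scalar_of_mem_commutant H.closed H.simple hpC
  have hpos : ∀ w, E (star w * w) ≠ 0 → ∀ s : ℂ, E (star w * w) = s • 1 → 0 < s.re ∧ s.im = 0 := by
    intro w hw s hs
    obtain ⟨y, hy⟩ := H.exp.2.2.1 w
    obtain ⟨h1, h2⟩ := scalar_nonneg (hs.symm.trans hy)
    refine ⟨lt_of_le_of_ne h1 fun h3 => hw ?_, h2⟩
    rw [hs, show s = 0 from Complex.ext h3.symm h2, zero_smul]
  have h1 := hpos p (fun h => hp0 (H.faithful h)) tp (by rw [hps, hpp, htp])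
  have h2 := hpos x (fun h => hx0 (H.faithful h)) (t * tp) (by rw [ht', map_smul, htp, smul_smul])
  have him : t.im = 0 := by
    have := h2.2
    rw [Complex.mul_im, h1.2, mul_zero, zero_add] at this
    exact (mul_eq_zero.1 this).resolve_right h1.1.ne'
  have hre : 0 < t.re := by
    have := h2.1
    rw [Complex.mul_re, h1.2, mul_zero, sub_zero] at this
    exact pos_of_mul_pos_left this h1.1.le
  have htr : t = (t.re : ℂ) := Complex.ext rfl (by simpa using him)
  set q : ℂ := (((Real.sqrt t.re)⁻¹ : ℝ) : ℂ) with hq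
  have hqs : star q = q := by simp [hq]
  have hqq : q * q * t = 1 := by
    rw [hq, htr, ← Complex.ofReal_mul, Complex.ofReal_re, ← Complex.ofReal_mul, ← mul_inv,
      Real.mul_self_sqrt hre.le, inv_mul_cancel₀ hre.ne', Complex.ofReal_one]
  have hfx : ∀ j, star (f j) * x = 0 := by
    intro j
    have : star (f j) * z = star (f j) := by
      rw [hz, Finset.mul_sum]
      simp only [← mul_assoc, hff, ite_mul, zero_mul, Finset.sum_ite_eq, Finset.mem_univ, if_true]
      have := congrArg star (hfp j)
      simpa [hps] using this
    rw [hx, ← mul_assoc, ← mul_assoc, mul_sub, mul_one, this, sub_self, zero_mul, zero_mul]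
  have hxf : ∀ j, star x * f j = 0 := by
    intro j
    have := congrArg star (hfx j)
    simpa using this
  refine hlast ⟨Fin.cons (q • x) f, ?_, ?_, ?_⟩
  · refine Fin.cases ?_ fun i => ?_
    · exact SMulMemClass.smul_mem _ hxC
    · exact hfC i
  · refine Fin.cases ?_ fun i => ?_
    · simp [hxp]
    · exact hfp i
  · refine Fin.cases (Fin.cases ?_ fun j => ?_) fun i => (Fin.cases ?_ fun j => ?_)
    · simp only [Fin.cons_zero, if_true]
      rw [star_smul, hqs, smul_mul_smul_comm, ht', smul_smul, hqq, one_smul]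
    · simp [hxf, (Fin.succ_ne_zero j).symm]
    · simp [hfx]
    · simp [hff]
end Structure

/-! ### The orbit of a block under the normalizer -/

section Structure
variable {𝒜 : Type*} [CStarAlgebra 𝒜]
variable {B : StarSubalgebra ℂ 𝒜} {E : 𝒜 →ₗ[ℂ] 𝒜} {r : ℝ}

namespace IsBlock
variable {n : ℕ} {p : 𝒜} {f : Fin n → 𝒜}

/-- The central support of a block. -/
def support (f : Fin n → 𝒜) : 𝒜 := ∑ j, f j * star (f j)

lemma support_mem (h : IsBlock B p f) : support f ∈ commutant B :=
  sum_mem fun j _ => mul_mem (h.mem j) (star_mem (h.mem j))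

lemma star_support (f : Fin n → 𝒜) : star (support f) = support f := by
  simp [support, star_sum]

lemma p_mul_star (h : IsBlock B p f) (i : Fin n) : p * star (f i) = star (f i) := by
  have := congrArg star (h.mul_p i)
  simpa [h.p_star] using this

lemma support_mul (h : IsBlock B p f) (i : Fin n) : support f * f i = f i := by
  simp only [support, Finset.sum_mul, mul_assoc, h.star_mul, mul_ite, mul_zero, Finset.sum_ite_eq',
    Finset.mem_univ, if_true, h.mul_p]

lemma support_idem (h : IsBlock B p f) : support f * support f = support f := by
  conv_lhs => enter [2]; rw [support]
  rw [Finset.mul_sum]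
  simp only [← mul_assoc, h.support_mul]; rfl

lemma support_ne (h : IsBlock B p f) (hn : 1 ≤ n) : support f ≠ 0 := by
  intro h0
  have h1 := h.support_mul ⟨0, hn⟩
  rw [h0, zero_mul] at h1
  have h2 := h.star_mul ⟨0, hn⟩ ⟨0, hn⟩
  rw [if_pos rfl, ← h1, mul_zero] at h2
  exact h.p_ne h2.symm

lemma support_central (h : IsBlock B p f) {c : 𝒜} (hc : c ∈ commutant B) :
    support f * c = c * support f := by
  have key : ∀ c ∈ commutant B, c * support f = support f * c * support f := by
    intro c hc
    have : (1 - support f) * c * support f = 0 := by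
      conv_lhs => enter [2]; rw [support]
      rw [Finset.mul_sum]
      refine Finset.sum_eq_zero fun i _ => ?_
      rw [← mul_assoc]
      have := h.maximal c hc i
      rw [show (1 - support f) * c * f i = 0 from this, zero_mul]
    rw [sub_mul, sub_mul, one_mul, sub_eq_zero] at this
    exact this
  rw [key c hc]
  have := congrArg star (key _ (star_mem hc))
  simpa [star_support, mul_assoc] using this

lemma central_mul_support (h : IsBlock B p f) {d : 𝒜} (hd : d ∈ commutant B)
    (hdc : ∀ c ∈ commutant B, d * c = c * d) : ∃ t : ℂ, d * support f = t • support f := by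
  obtain ⟨t, ht⟩ := h.p_min d hd
  refine ⟨t, ?_⟩
  rw [support, Finset.mul_sum, Finset.smul_sum]
  refine Finset.sum_congr rfl fun i _ => ?_
  have : d * f i = t • f i := by
    calc d * f i = f i * (p * d * p) := by
          rw [← hdc p h.p_mem, mul_assoc d, h.p_idem, hdc p h.p_mem, ← mul_assoc, h.mul_p,
            hdc _ (h.mem i)]
      _ = t • f i := by rw [ht, mul_smul_comm, h.mul_p]
  rw [← mul_assoc, this, smul_mul_assoc]

lemma mul_support_expand (h : IsBlock B p f) {c : 𝒜} (hc : c ∈ commutant B) :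
    ∃ t : Fin n → Fin n → ℂ, support f * c * support f = ∑ i, ∑ j, t i j • (f i * star (f j)) := by
  have : ∀ i j, ∃ t : ℂ, star (f i) * c * f j = t • p := by
    intro i j
    obtain ⟨t, ht⟩ := h.p_min _ (mul_mem (mul_mem (star_mem (h.mem i)) hc) (h.mem j))
    refine ⟨t, ?_⟩
    rw [← ht]
    simp only [← mul_assoc, h.p_mul_star]
    simp only [mul_assoc, h.mul_p]
  choose t ht using this
  refine ⟨t, ?_⟩
  simp only [support, Finset.sum_mul, Finset.mul_sum]
  rw [Finset.sum_comm]
  refine Finset.sum_congr rfl fun i _ => Finset.sum_congr rfl fun j _ => ?_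
  calc f i * star (f i) * c * (f j * star (f j)) = f i * (star (f i) * c * f j) * star (f j) := by
        simp only [mul_assoc]
    _ = _ := by rw [ht, mul_smul_comm, h.mul_p, smul_mul_assoc]

/-- Two normalizer conjugates of the support are equal or orthogonal. -/
lemma conj_support (h : IsBlock B p f) {u v : 𝒜}
    (hu : u ∈ normalizerMonoid B) (hv : v ∈ normalizerMonoid B)
    (hne : u * support f * star u * (v * support f * star v) ≠ 0) :
    u * support f * star u = v * support f * star v := by
  have key : ∀ u v, u ∈ normalizerMonoid B → v ∈ normalizerMonoid B →
      u * support f * star u * (v * support f * star v) ≠ 0 →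
      u * support f * star u * (v * support f * star v) = v * support f * star v := by
    intro u v hu hv hne
    set d := star v * (u * support f * star u) * v with hd
    have hdC : d ∈ commutant B := conj_mem_commutant' hv (conj_mem_commutant hu h.support_mem)
    have hdc : ∀ c ∈ commutant B, d * c = c * d := by
      intro c hc
      have h1 := h.support_central (conj_mem_commutant' hu (conj_mem_commutant hv hc))
      have h2 := congrArg (fun y => star v * u * y * (star u * v)) h1
      simp only [mul_assoc, NM_mul_star_assoc hu, NM_star_mul_assoc hv, NM_star_mul hv,
        mul_one] at h2
      simp only [hd, mul_assoc]
      exact h2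
    have hdd : d * d = d := by
      have h1 := congrArg (fun y => star v * u * y * (star u * v)) h.support_idem
      simp only [mul_assoc] at h1
      simp only [hd, mul_assoc, NM_mul_star_assoc hv, NM_star_mul_assoc hu]
      exact h1
    obtain ⟨t, ht⟩ := h.central_mul_support hdC hdc
    have e : u * support f * star u * (v * support f * star v) = v * (d * support f) * star v := by
      simp only [hd, mul_assoc, NM_mul_star_assoc hv]
    have htt : t * t = t := by
      by_contra hcon
      have h1 : (t * t) • support f = t • support f := by
        rw [← ht, ← smul_smul, ← ht, ← mul_smul_comm, ← ht, ← mul_assoc, hdd]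
      have h2 : (t * t - t) • support f = 0 := by rw [sub_smul, h1, sub_self]
      rcases smul_eq_zero.1 h2 with h3 | h3
      · exact hcon (sub_eq_zero.1 h3)
      · apply hne; simp [h3]
    have ht0 : t ≠ 0 := by
      rintro rfl
      apply hne; rw [e, ht]; simp
    have ht1 : t = 1 := by
      have : t * t = t * 1 := by rw [htt, mul_one]
      exact mul_left_cancel₀ ht0 this
    rw [e, ht, ht1, one_smul]
  have sa : ∀ w, star (w * support f * star w) = w * support f * star w := by
    intro w; simp [star_support, mul_assoc]
  have hne' : v * support f * star v * (u * support f * star u) ≠ 0 := by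
    intro h0
    apply hne
    have := congrArg star h0
    rwa [StarMul.star_mul, sa, sa, star_zero] at this
  have h1 := key u v hu hv hne
  have h2 := congrArg star (key v u hv hu hne')
  rw [StarMul.star_mul, sa, sa] at h2
  rw [← h2, h1]

end IsBlock

lemma span_normalizer_dense (hreg : IsRegular (B : Set 𝒜)) (V : Submodule ℂ 𝒜)
    (hV : IsClosed (V : Set 𝒜)) (h : ∀ u ∈ normalizerMonoid B, u ∈ V) (x : 𝒜) : x ∈ V := by
  have hx : x ∈ (StarAlgebra.adjoin ℂ (normalizer (B : Set 𝒜))).topologicalClosure := by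
    rw [hreg]; trivial
  have hsub : ((StarAlgebra.adjoin ℂ (normalizer (B : Set 𝒜)) : StarSubalgebra ℂ 𝒜) : Set 𝒜) ⊆ V := by
    intro y hy
    have hy' : y ∈ Subalgebra.toSubmodule
        (StarAlgebra.adjoin ℂ (normalizer (B : Set 𝒜))).toSubalgebra := hy
    rw [StarAlgebra.adjoin_eq_span] at hy'
    refine Submodule.span_le.2 ?_ hy'
    intro z hz
    refine h z ((Submonoid.closure_le (S := normalizerMonoid B)).2 ?_ hz)
    rintro w (hw | hw)
    · exact hw
    · have := star_mem_NM (B := B) (u := star w) hw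
      simpa using this
  exact closure_minimal hsub hV hx

lemma central_of_commute_normalizer (hreg : IsRegular (B : Set 𝒜)) {z : 𝒜}
    (h : ∀ u ∈ normalizerMonoid B, z * u = u * z) (x : 𝒜) : z * x = x * z := by
  have := span_normalizer_dense hreg
    (LinearMap.ker (LinearMap.mulLeft ℂ z - LinearMap.mulRight ℂ z)) ?_ ?_ x
  · simpa [sub_eq_zero] using this
  · have : ((LinearMap.ker (LinearMap.mulLeft ℂ z - LinearMap.mulRight ℂ z) : Submodule ℂ 𝒜) : Set 𝒜)
        = {x | z * x - x * z = 0} := by ext; simp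
    rw [this]
    exact isClosed_eq (by fun_prop) continuous_const
  · intro u hu
    simp [h u hu]

/-- The normalizer moves the support of a block around, and the conjugates partition the unit. -/
lemma HasIndex.exists_orbit [Nontrivial 𝒜] (H : HasIndex B E r) (hreg : IsRegular (B : Set 𝒜))
    (hA : IsSimpleCStar (Set.univ : Set 𝒜)) {n : ℕ} {p : 𝒜} {f : Fin n → 𝒜} (hn : 1 ≤ n)
    (h : IsBlock B p f) :
    ∃ (k : ℕ) (t : Fin k → 𝒜), 1 ≤ k ∧ (∀ s, t s ∈ normalizerMonoid B) ∧
      (∀ s s', s ≠ s' → t s * IsBlock.support f * star (t s) *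
        (t s' * IsBlock.support f * star (t s')) = 0) ∧
      (∑ s, t s * IsBlock.support f * star (t s) = 1) ∧
      (∀ u ∈ normalizerMonoid B, ∃ s, u * IsBlock.support f * star u =
        t s * IsBlock.support f * star (t s)) := by
  set z := IsBlock.support f with hz
  have hz0 : z ≠ 0 := h.support_ne hn
  have hzC := h.support_mem
  have sa : ∀ w, star (w * z * star w) = w * z * star w := by
    intro w; simp [hz, IsBlock.star_support, mul_assoc]
  have idem : ∀ w ∈ normalizerMonoid B, w * z * star w * (w * z * star w) = w * z * star w := by
    intro w hw
    simp only [mul_assoc, NM_star_mul_assoc hw]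
    rw [← mul_assoc z z, h.support_idem]
  have ne : ∀ w ∈ normalizerMonoid B, w * z * star w ≠ 0 := by
    intro w hw h0
    apply hz0
    have := congrArg (fun y => star w * y * w) h0
    simpa [mul_assoc, NM_star_mul_assoc hw, NM_star_mul hw] using this
  have hbd : ∀ m : ℕ, (∃ t : Fin m → 𝒜, (∀ s, t s ∈ normalizerMonoid B) ∧
      ∀ s s', s ≠ s' → t s * z * star (t s) * (t s' * z * star (t s')) = 0) → (m : ℝ) ≤ r := by
    rintro m ⟨t, ht, hto⟩
    exact H.card_le (fun s => t s * z * star (t s)) (fun s => conj_mem_commutant (ht s) hzC)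
      (fun s => sa _) (fun s => ne _ (ht s)) hto
  obtain ⟨k, hk, ⟨t, ht, hto⟩, hlast⟩ := exists_last _ hbd (m₀ := 1)
    ⟨fun _ => 1, fun _ => one_mem _, fun s s' hss => absurd (Subsingleton.elim s s') hss⟩
  have horb : ∀ u ∈ normalizerMonoid B, ∃ s, u * z * star u = t s * z * star (t s) := by
    intro u hu
    by_contra! hcon
    have h1 : ∀ s, u * z * star u * (t s * z * star (t s)) = 0 := by
      intro s
      by_contra h2
      exact hcon s (h.conj_support hu (ht s) h2)
    have h2 : ∀ s, t s * z * star (t s) * (u * z * star u) = 0 := by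
      intro s
      have := congrArg star (h1 s)
      rwa [StarMul.star_mul, sa, sa, star_zero] at this
    refine hlast ⟨Fin.cons u t, ?_, ?_⟩
    · refine Fin.cases ?_ fun s => ?_
      · exact hu
      · exact ht s
    · refine Fin.cases (Fin.cases ?_ fun j => ?_) fun i => (Fin.cases ?_ fun j => ?_)
      · intro h; exact absurd rfl h
      · intro _; exact h1 j
      · intro _; exact h2 i
      · intro h; exact hto i j (fun h' => h (by rw [h']))
  refine ⟨k, t, hk, ht, hto, ?_, horb⟩
  set e := ∑ s, t s * z * star (t s) with he
  have hes : star e = e := by rw [he, star_sum]; simp only [sa]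
  have hez : ∀ u ∈ normalizerMonoid B, e * (u * z * star u) = u * z * star u := by
    intro u hu
    obtain ⟨s, hs⟩ := horb u hu
    rw [hs, he, Finset.sum_mul, Finset.sum_eq_single s]
    · exact idem _ (ht s)
    · intro s' _ hs'; exact hto _ _ hs'
    · intro h; exact absurd (Finset.mem_univ s) h
  have hue : ∀ u ∈ normalizerMonoid B, e * u * e = u * e := by
    intro u hu
    have : u * e = ∑ s, (u * t s) * z * star (u * t s) * u := by
      rw [he, Finset.mul_sum]
      refine Finset.sum_congr rfl fun s _ => ?_
      simp only [StarMul.star_mul, mul_assoc, NM_star_mul hu, mul_one]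
    rw [mul_assoc, this, Finset.mul_sum]
    refine Finset.sum_congr rfl fun s _ => ?_
    rw [← mul_assoc, hez _ (mul_mem hu (ht s))]
  have hcomm : ∀ u ∈ normalizerMonoid B, e * u = u * e := by
    intro u hu
    have := congrArg star (hue _ (star_mem_NM hu))
    simp only [StarMul.star_mul, hes, star_star] at this
    rw [← hue u hu, mul_assoc, this]
  obtain ⟨q, hq⟩ := scalar_of_central (S := (⊤ : StarSubalgebra ℂ 𝒜)) (by simp) (by simpa using hA)
    (z := e) trivial (fun x _ => central_of_commute_normalizer hreg hcomm x)
  let s0 : Fin k := ⟨0, hk⟩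
  have h3 := hez _ (ht s0)
  rw [hq, smul_mul_assoc, one_mul] at h3
  have : q = 1 := smul_left_injective ℂ (ne _ (ht s0)) (by simpa using h3)
  rw [hq, this, one_smul]
end Structure

/-! ### Matrix units and the uniform expectation -/

section MatrixUnits
variable {𝒜 : Type*} [CStarAlgebra 𝒜]
variable {B : StarSubalgebra ℂ 𝒜} {E : 𝒜 →ₗ[ℂ] 𝒜} {r : ℝ}

/-- A system of matrix units `e s i j` for the relative commutant of `B`, all of whose blocks
(indexed by `s`) have the same size, such that the normalizer of `B` permutes the central
projections `∑ i, e s i i`. -/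
structure IsMatrixUnits (B : StarSubalgebra ℂ 𝒜) {σ ι : Type*} [Fintype σ] [Fintype ι]
    [DecidableEq σ] [DecidableEq ι] (e : σ → ι → ι → 𝒜) : Prop where
  mem : ∀ s i j, e s i j ∈ commutant B
  star_eq : ∀ s i j, star (e s i j) = e s j i
  mul_eq : ∀ s i j s' i' j', e s i j * e s' i' j' = if s = s' ∧ j = i' then e s i j' else 0
  sum_one : ∑ s, ∑ i, e s i i = 1
  span : ∀ c ∈ commutant B, ∃ t : σ → ι → ι → ℂ, c = ∑ s, ∑ i, ∑ j, t s i j • e s i j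
  orbit : ∀ u ∈ normalizerMonoid B, ∀ s, ∃ s', u * (∑ i, e s i i) * star u = ∑ i, e s' i i

/-- `E` restricts to the trace on the relative commutant of `B` which gives all minimal projections
of the system of matrix units `e` the same weight. -/
def IsUniform {σ ι : Type*} [Fintype σ] [Fintype ι] [DecidableEq ι]
    (E : 𝒜 →ₗ[ℂ] 𝒜) (e : σ → ι → ι → 𝒜) : Prop :=
  ∀ s i j, E (e s i j) = if i = j then ((Fintype.card σ * Fintype.card ι : ℂ)⁻¹) • 1 else 0

lemma HasIndex.exists_matrixUnits [Nontrivial 𝒜] (H : HasIndex B E r)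
    (hreg : IsRegular (B : Set 𝒜)) (hA : IsSimpleCStar (Set.univ : Set 𝒜)) :
    ∃ (k n : ℕ) (e : Fin k → Fin n → Fin n → 𝒜) (E₁ : 𝒜 →ₗ[ℂ] 𝒜), 1 ≤ k ∧ 1 ≤ n ∧
      IsMatrixUnits B e ∧ IsCondExp (B : Set 𝒜) E₁ ∧ IsUniform E₁ e := by
  obtain ⟨n, p, f, hn, h⟩ := H.exists_block
  obtain ⟨k, t, hk, ht, hto, hsum, horb⟩ := H.exists_orbit hreg hA hn h
  set z := IsBlock.support f with hz
  let g : Fin k → Fin n → 𝒜 := fun s i => t s * f i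
  have hgp : ∀ s i, g s i * p = g s i := fun s i => by simp only [g, mul_assoc, h.mul_p]
  have hpg : ∀ s i, p * star (g s i) = star (g s i) := fun s i => by
    simp only [g, star_mul, ← mul_assoc, h.p_mul_star]
  have hzg : ∀ s, ∑ i, g s i * star (g s i) = t s * z * star (t s) := by
    intro s
    simp only [g, hz, IsBlock.support, star_mul, Finset.mul_sum, Finset.sum_mul, mul_assoc]
  have hgz : ∀ s i, t s * z * star (t s) * g s i = g s i := by
    intro s i
    simp only [g, mul_assoc, NM_star_mul_assoc (ht s), h.support_mul, hz]
  have hgg : ∀ s i s' i', star (g s i) * g s' i' = if s = s' ∧ i = i' then p else 0 := by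
    intro s i s' i'
    by_cases hs : s = s'
    · subst hs
      simp only [g, star_mul, mul_assoc, NM_star_mul_assoc (ht s), h.star_mul, true_and]
    · rw [if_neg (fun h' => hs h'.1), ← hgz s i, ← hgz s' i']
      have hsa : star (t s * z * star (t s)) = t s * z * star (t s) := by
        simp [hz, IsBlock.star_support, mul_assoc]
      rw [star_mul, hsa]
      have := hto s s' hs
      calc star (g s i) * (t s * z * star (t s)) * (t s' * z * star (t s') * g s' i')
          = star (g s i) * (t s * z * star (t s) * (t s' * z * star (t s'))) * g s' i' := by
            simp only [mul_assoc]
        _ = 0 := by rw [this]; simp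
  obtain ⟨τ, hτ⟩ := H.exp.scalar_of_mem_commutant H.closed H.simple h.p_mem
  have hτ0 : τ ≠ 0 := by
    rintro rfl
    refine h.p_ne (H.faithful ?_)
    rw [h.p_star, h.p_idem, hτ, zero_smul]
  have hτpos : 0 ≤ τ.re ∧ τ.im = 0 := by
    obtain ⟨y, hy⟩ := H.exp.2.2.1 p
    rw [h.p_star, h.p_idem, hτ] at hy
    exact scalar_nonneg hy
  have hnC : (n : ℂ) ≠ 0 := by exact_mod_cast (by omega : n ≠ 0)
  have hkC : (k : ℂ) ≠ 0 := by exact_mod_cast (by omega : k ≠ 0)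
  let κ : ℂ := ((k * n : ℂ))⁻¹ * τ⁻¹
  have hκτ : κ * τ = ((k * n : ℂ))⁻¹ := by simp only [κ]; field_simp
  obtain ⟨ρ, hρ⟩ : ∃ ρ : ℝ, κ = (ρ : ℂ) * ρ := by
    refine ⟨Real.sqrt ((k * n : ℝ)⁻¹ * τ.re⁻¹), ?_⟩
    have h1 : (τ.re : ℂ) = τ := Complex.ext (by simp) (by simp [hτpos.2])
    rw [← Complex.ofReal_mul, Real.mul_self_sqrt
      (mul_nonneg (inv_nonneg.2 (by positivity)) (inv_nonneg.2 hτpos.1))]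
    push_cast
    rw [h1]
  let E₁ : 𝒜 →ₗ[ℂ] 𝒜 := κ • ∑ s, ∑ i, LinearMap.mulRight ℂ (star (t s)) ∘ₗ
    LinearMap.mulLeft ℂ (t s) ∘ₗ E ∘ₗ LinearMap.mulRight ℂ (g s i) ∘ₗ
      LinearMap.mulLeft ℂ (star (g s i))
  have hE₁ : ∀ x, E₁ x = κ • ∑ s, ∑ i, t s * E (star (g s i) * x * g s i) * star (t s) := by
    intro x
    simp [E₁]
  refine ⟨k, n, fun s i j => g s i * star (g s j), E₁, hk, hn, ⟨?_, ?_, ?_, ?_, ?_, ?_⟩, ?_, ?_⟩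
  · intro s i j
    have : g s i * star (g s j) = t s * (f i * star (f j)) * star (t s) := by
      simp only [g, star_mul, mul_assoc]
    rw [this]
    exact conj_mem_commutant (ht s) (mul_mem (h.mem i) (star_mem (h.mem j)))
  · intro s i j; simp
  · intro s i j s' i' j'
    calc g s i * star (g s j) * (g s' i' * star (g s' j'))
        = g s i * (star (g s j) * g s' i') * star (g s' j') := by simp only [mul_assoc]
      _ = _ := by
        rw [hgg]
        split_ifs with h'
        · rw [hgp, h'.1]
        · simp
  · simp only [hzg, hsum]
  · intro c hc
    have h1 : ∀ s, ∃ a : Fin n → Fin n → ℂ, t s * z * star (t s) * c * (t s * z * star (t s)) =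
        ∑ i, ∑ j, a i j • (g s i * star (g s j)) := by
      intro s
      obtain ⟨a, ha⟩ := h.mul_support_expand (conj_mem_commutant' (ht s) hc)
      refine ⟨a, ?_⟩
      have := congrArg (fun y => t s * y * star (t s)) ha
      simp only [Finset.mul_sum, Finset.sum_mul, mul_smul_comm, smul_mul_assoc] at this
      simp only [g, hz, star_mul, mul_assoc] at this ⊢
      exact this
    choose a ha using h1
    refine ⟨a, ?_⟩
    simp only [← ha]
    have hcomm : ∀ s, t s * z * star (t s) * c = c * (t s * z * star (t s)) := by
      intro s
      have := congrArg (fun y => t s * y * star (t s))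
        (h.support_central (conj_mem_commutant' (ht s) hc))
      simpa only [← hz, mul_assoc, NM_mul_star_assoc (ht s), NM_mul_star (ht s), mul_one] using this
    have hid : ∀ s, t s * z * star (t s) * (t s * z * star (t s)) = t s * z * star (t s) := by
      intro s
      have := congrArg (fun y => t s * y * star (t s)) h.support_idem
      simpa only [← hz, mul_assoc, NM_star_mul_assoc (ht s)] using this
    simp only [hcomm, mul_assoc c, hid]
    rw [← Finset.mul_sum, hsum, mul_one]
  · intro u hu s
    obtain ⟨s', hs'⟩ := horb _ (mul_mem hu (ht s))
    refine ⟨s', ?_⟩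
    simp only [hzg, ← hs', star_mul, mul_assoc]
  · refine ⟨?_, ?_, ?_, ?_⟩
    · intro x
      rw [hE₁]
      exact SMulMemClass.smul_mem _ (sum_mem fun s _ => sum_mem fun i _ =>
        (mem_NM.1 (ht s)).2.1 _ (H.exp.mem _))
    · intro b hb
      rw [hE₁]
      have : ∀ s i, t s * E (star (g s i) * b * g s i) * star (t s) = τ • b := by
        intro s i
        have hb' : star (t s) * b * t s ∈ B := (mem_NM.1 (ht s)).2.2 _ hb
        have h1 : star (g s i) * b * g s i = star (t s) * b * t s * p := by
          calc star (g s i) * b * g s i = star (f i) * (star (t s) * b * t s) * f i := by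
                simp only [g, star_mul, mul_assoc]
            _ = star (t s) * b * t s * (star (f i) * f i) := by
                rw [mem_commutant.1 (star_mem (h.mem i)) _ hb', mul_assoc]
            _ = _ := by rw [h.star_mul, if_pos rfl]
        rw [h1, H.exp.mul_left hb', hτ]
        simp only [mul_smul_comm, smul_mul_assoc, mul_one, mul_assoc, NM_mul_star_assoc (ht s),
          NM_mul_star (ht s)]
      simp only [this, Finset.sum_const, Finset.card_univ, Fintype.card_fin]
      rw [← Nat.cast_smul_eq_nsmul ℂ, ← Nat.cast_smul_eq_nsmul ℂ, smul_smul, smul_smul, smul_smul]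
      have : κ * k * n * τ = 1 := by simp only [κ]; field_simp
      rw [this, one_smul]
    · intro x
      have h1 : ∀ s i, ∃ y, E (star (g s i) * (star x * x) * g s i) = star y * y := by
        intro s i
        obtain ⟨y, hy⟩ := H.exp.2.2.1 (x * g s i)
        refine ⟨y, ?_⟩
        rw [← hy]; simp only [star_mul, mul_assoc]
      choose y hy using h1
      obtain ⟨w, hw⟩ := exists_star_mul_self_sum (Finset.univ : Finset (Fin k × Fin n))
        (fun q => (ρ : ℂ) • (y q.1 q.2 * star (t q.1)))
      refine ⟨w, ?_⟩
      rw [← hw, hE₁, Fintype.sum_prod_type]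
      simp only [hy, Finset.smul_sum]
      refine Finset.sum_congr rfl fun s _ => Finset.sum_congr rfl fun i _ => ?_
      simp only [star_smul, star_mul, star_star, smul_mul_assoc, mul_smul_comm, smul_smul,
        mul_assoc]
      rw [hρ]; simp
    · intro b₁ hb₁ b₂ hb₂ x
      rw [hE₁, hE₁, mul_smul_comm, smul_mul_assoc]
      congr 1
      simp only [Finset.mul_sum, Finset.sum_mul]
      refine Finset.sum_congr rfl fun s _ => Finset.sum_congr rfl fun i _ => ?_
      have hb₁' : star (t s) * b₁ * t s ∈ B := (mem_NM.1 (ht s)).2.2 _ hb₁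
      have hb₂' : star (t s) * b₂ * t s ∈ B := (mem_NM.1 (ht s)).2.2 _ hb₂
      have h1 : star (g s i) * (b₁ * x * b₂) * g s i = (star (t s) * b₁ * t s) *
          (star (g s i) * x * g s i) * (star (t s) * b₂ * t s) := by
        calc star (g s i) * (b₁ * x * b₂) * g s i = star (f i) * (star (t s) * b₁ * t s) *
              (star (t s) * x * t s) * ((star (t s) * b₂ * t s) * f i) := by
              simp only [g, star_mul, mul_assoc, NM_mul_star_assoc (ht s)]
          _ = _ := by
            rw [mem_commutant.1 (star_mem (h.mem i)) _ hb₁', ← mem_commutant.1 (h.mem i) _ hb₂']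
            simp only [g, star_mul, mul_assoc]
      rw [h1, H.exp.2.2.2 _ hb₁' _ hb₂']
      simp only [mul_assoc, NM_mul_star_assoc (ht s), NM_mul_star (ht s), mul_one]
  · intro s i j
    simp only [Fintype.card_fin]
    rw [hE₁]
    have h1 : ∀ s' i', star (g s' i') * (g s i * star (g s j)) * g s' i' =
        if s' = s ∧ i' = i ∧ i = j then p else 0 := by
      intro s' i'
      calc star (g s' i') * (g s i * star (g s j)) * g s' i'
          = (star (g s' i') * g s i) * (star (g s j) * g s' i') := by simp only [mul_assoc]
        _ = _ := by
          rw [hgg, hgg]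
          by_cases h1 : s' = s
          · subst h1
            by_cases h2 : i' = i
            · subst h2
              by_cases h3 : i' = j
              · simp [h3, h.p_idem]
              · simp [h3, Ne.symm h3]
            · simp [h2]
          · simp [h1]
    simp only [h1]
    split_ifs with hij
    · subst hij
      rw [Finset.sum_eq_single s, Finset.sum_eq_single i]
      · simp only [and_self, if_true, hτ, mul_smul_comm, smul_mul_assoc, mul_one,
          NM_mul_star (ht s), smul_smul, hκτ]
      · intro b _ hb; simp [hb]
      · simp
      · intro b _ hb; simp [hb]
      · simp
    · simp [hij]

lemma IsMatrixUnits.reindex {σ ι σ' ι' : Type*} [Fintype σ] [Fintype ι] [DecidableEq σ]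
    [DecidableEq ι] [Fintype σ'] [Fintype ι'] [DecidableEq σ'] [DecidableEq ι']
    {e : σ → ι → ι → 𝒜} (h : IsMatrixUnits B e) (φ : σ' ≃ σ) (ψ : ι' ≃ ι) :
    IsMatrixUnits B (fun s i j => e (φ s) (ψ i) (ψ j)) := by
  refine ⟨fun _ _ _ => h.mem _ _ _, fun _ _ _ => h.star_eq _ _ _, ?_, ?_, ?_, ?_⟩
  · intro s i j s' i' j'
    simp only [h.mul_eq, φ.injective.eq_iff, ψ.injective.eq_iff]
  · rw [← h.sum_one, ← φ.sum_comp]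
    exact Finset.sum_congr rfl fun s _ => ψ.sum_comp fun i => e (φ s) i i
  · intro c hc
    obtain ⟨t, ht⟩ := h.span c hc
    refine ⟨fun s i j => t (φ s) (ψ i) (ψ j), ?_⟩
    rw [ht, ← φ.sum_comp]
    refine Finset.sum_congr rfl fun s _ => ?_
    rw [← ψ.sum_comp]
    exact Finset.sum_congr rfl fun i _ => (ψ.sum_comp fun j => t (φ s) (ψ i) j • e (φ s) (ψ i) j).symm
  · intro u hu s
    obtain ⟨s', hs'⟩ := h.orbit u hu (φ s)
    refine ⟨φ.symm s', ?_⟩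
    have := fun s => ψ.sum_comp fun i => e s i i
    simp only [this, hs', Equiv.apply_symm_apply]

lemma IsUniform.reindex {σ ι σ' ι' : Type*} [Fintype σ] [Fintype ι]
    [DecidableEq ι] [Fintype σ'] [Fintype ι'] [DecidableEq ι']
    {e : σ → ι → ι → 𝒜} (h : IsUniform E e) (φ : σ' ≃ σ) (ψ : ι' ≃ ι) :
    IsUniform E (fun s i j => e (φ s) (ψ i) (ψ j)) := by
  intro s i j
  simp only [h (φ s), ψ.injective.eq_iff, Fintype.card_congr φ, Fintype.card_congr ψ]

section Trace
variable {σ ι : Type*} [Fintype σ] [Fintype ι] [DecidableEq σ] [DecidableEq ι]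
  {e : σ → ι → ι → 𝒜}

/-- A uniform expectation is tracial on the relative commutant. -/
lemma IsUniform.trace (h : IsMatrixUnits B e) (hE : IsUniform E e) {c d : 𝒜}
    (hc : c ∈ commutant B) (hd : d ∈ commutant B) : E (c * d) = E (d * c) := by
  have key : ∀ s i j s' i' j', E (e s i j * e s' i' j') = E (e s' i' j' * e s i j) := by
    intro s i j s' i' j'
    rw [h.mul_eq, h.mul_eq]
    by_cases hs : s = s'
    · subst hs
      by_cases h1 : j = i' <;> by_cases h2 : j' = i
      · subst h1 h2; simp [hE _]
      · simp [h1, h2, hE _, Ne.symm h2]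
      · simp [h1, h2, hE _, Ne.symm h1]
      · simp [h1, h2]
    · simp [hs, Ne.symm hs]
  obtain ⟨a, rfl⟩ := h.span c hc
  obtain ⟨b, rfl⟩ := h.span d hd
  have step : ∀ s i j, E (e s i j * ∑ s, ∑ i, ∑ j, b s i j • e s i j) =
      E ((∑ s, ∑ i, ∑ j, b s i j • e s i j) * e s i j) := by
    intro s i j
    simp only [Finset.mul_sum, Finset.sum_mul, map_sum, mul_smul_comm, smul_mul_assoc, map_smul,
      key s i j]
  generalize (∑ s, ∑ i, ∑ j, b s i j • e s i j) = d at step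
  simp only [Finset.mul_sum, Finset.sum_mul, map_sum, mul_smul_comm, smul_mul_assoc, map_smul, step]

/-- A uniform expectation is invariant under the normalizer on the relative commutant. -/
lemma IsUniform.invariant (h : IsMatrixUnits B e) (hE : IsUniform E e) {u c : 𝒜}
    (hu : u ∈ normalizerMonoid B) (hc : c ∈ commutant B) : E (u * c * star u) = E c := by
  have hC : ∀ s i j, u * e s i j * star u ∈ commutant B := fun s i j =>
    conj_mem_commutant hu (h.mem s i j)
  have hmul : ∀ s i j l, u * e s i j * star u = (u * e s i l * star u) * (u * e s l j * star u) := by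
    intro s i j l
    simp only [mul_assoc, NM_star_mul_assoc hu]
    rw [← mul_assoc (e s i l), h.mul_eq]; simp
  have h0 : ∀ s i j, i ≠ j → E (u * e s i j * star u) = 0 := by
    intro s i j hij
    rw [hmul s i j j, hE.trace h (hC _ _ _) (hC _ _ _)]
    simp only [mul_assoc, NM_star_mul_assoc hu]
    rw [← mul_assoc (e s j j), h.mul_eq]; simp [hij.symm]
  have h1 : ∀ s i j, E (u * e s i i * star u) = E (u * e s j j * star u) := by
    intro s i j
    rw [hmul s i i j, hE.trace h (hC _ _ _) (hC _ _ _), ← hmul]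
  have h2 : ∀ s i, E (u * e s i i * star u) = E (e s i i) := by
    intro s i
    obtain ⟨s', hs'⟩ := h.orbit u hu s
    have h3 := congrArg E hs'
    simp only [Finset.mul_sum, Finset.sum_mul, map_sum, h1 s _ i, hE _, if_true,
      Finset.sum_const] at h3
    have hn : (Finset.univ : Finset ι).card ≠ 0 := by
      rw [Finset.card_univ]; have : Nonempty ι := ⟨i⟩
      exact Fintype.card_ne_zero
    rw [hE, if_pos rfl]
    rw [← Nat.cast_smul_eq_nsmul ℂ, ← Nat.cast_smul_eq_nsmul ℂ] at h3
    exact smul_right_injective _ (Nat.cast_ne_zero.2 hn : ((Finset.univ : Finset ι).card : ℂ) ≠ 0) h3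
  have h3 : ∀ s i j, E (u * e s i j * star u) = E (e s i j) := by
    intro s i j
    by_cases hij : i = j
    · subst hij; exact h2 s i
    · rw [h0 s i j hij, hE, if_neg hij]
  obtain ⟨a, rfl⟩ := h.span c hc
  simp only [Finset.mul_sum, Finset.sum_mul, map_sum, mul_smul_comm, smul_mul_assoc, map_smul, h3]

end Trace
end MatrixUnits

/-! ### Clock and shift unitaries -/

section UnitaryBasis
variable {𝒜 : Type*} [CStarAlgebra 𝒜]
variable {B : StarSubalgebra ℂ 𝒜} {E : 𝒜 →ₗ[ℂ] 𝒜} {r : ℝ}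

/-- The characters of the group `ZMod k × ZMod n`, indexed by the group itself. -/
noncomputable def chi (k n : ℕ) [NeZero k] [NeZero n] (q ω : ZMod k × ZMod n) : ℂ :=
  ZMod.stdAddChar (q.1 * ω.1) * ZMod.stdAddChar (q.2 * ω.2)

lemma chi_comm (k n : ℕ) [NeZero k] [NeZero n] (q ω : ZMod k × ZMod n) :
    chi k n q ω = chi k n ω q := by
  simp [chi, mul_comm]

lemma star_stdAddChar {k : ℕ} [NeZero k] (x : ZMod k) :
    star (ZMod.stdAddChar x : ℂ) = ZMod.stdAddChar (-x) :=
  (AddChar.map_neg_eq_conj _ _).symm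

lemma star_chi_mul (k n : ℕ) [NeZero k] [NeZero n] (q ω ω' : ZMod k × ZMod n) :
    star (chi k n q ω) * chi k n q ω' =
      ZMod.stdAddChar (q.1 * (ω'.1 - ω.1)) * ZMod.stdAddChar (q.2 * (ω'.2 - ω.2)) := by
  simp only [chi, star_mul', star_stdAddChar]
  rw [mul_mul_mul_comm, ← AddChar.map_add_eq_mul, ← AddChar.map_add_eq_mul]
  congr 2 <;> ring

lemma star_chi_mul_self (k n : ℕ) [NeZero k] [NeZero n] (q ω : ZMod k × ZMod n) :
    star (chi k n q ω) * chi k n q ω = 1 := by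
  rw [star_chi_mul]; simp

lemma sum_star_chi_mul (k n : ℕ) [NeZero k] [NeZero n] (ω ω' : ZMod k × ZMod n) :
    ∑ q, star (chi k n q ω) * chi k n q ω' = if ω = ω' then (k * n : ℂ) else 0 := by
  simp only [star_chi_mul, Fintype.sum_prod_type, ← Finset.mul_sum, ← Finset.sum_mul]
  rw [AddChar.sum_mulShift _ (ZMod.isPrimitive_stdAddChar k),
    AddChar.sum_mulShift _ (ZMod.isPrimitive_stdAddChar n)]
  simp only [ZMod.card, sub_eq_zero, Prod.ext_iff, eq_comm (a := ω'.1), eq_comm (a := ω'.2)]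
  by_cases h1 : ω.1 = ω'.1 <;> by_cases h2 : ω.2 = ω'.2 <;> simp [h1, h2]

lemma sum_star_chi_mul' (k n : ℕ) [NeZero k] [NeZero n] (q q' : ZMod k × ZMod n) :
    ∑ ω, star (chi k n q ω) * chi k n q' ω = if q = q' then (k * n : ℂ) else 0 := by
  rw [← sum_star_chi_mul]
  simp only [chi_comm k n q, chi_comm k n q']

/-- A linear basis of the relative commutant of `B` which consists of unitaries and is orthonormal
for `E`. -/
structure IsUnitaryBasis (B : StarSubalgebra ℂ 𝒜) (E : 𝒜 →ₗ[ℂ] 𝒜) {W : Type*} [Fintype W]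
    [DecidableEq W] (w : W → 𝒜) : Prop where
  mem : ∀ α, w α ∈ commutant B
  star_mul_self : ∀ α, star (w α) * w α = 1
  mul_star_self : ∀ α, w α * star (w α) = 1
  orthonormal : ∀ α β, E (star (w α) * w β) = if α = β then 1 else 0
  span : ∀ c ∈ commutant B, ∃ t : W → ℂ, c = ∑ α, t α • w α

/-- The generalized Weyl (clock and shift) unitaries: the shift by `α.1` in each block, multiplied
by the diagonal unitary given by the character `α.2`. -/
noncomputable def weyl {k n : ℕ} [NeZero k] [NeZero n] (e : ZMod k → ZMod n → ZMod n → 𝒜)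
    (α : ZMod n × (ZMod k × ZMod n)) : 𝒜 :=
  ∑ ω : ZMod k × ZMod n, chi k n α.2 ω • e ω.1 (ω.2 + α.1) ω.2

lemma isUnitaryBasis_weyl {k n : ℕ} [NeZero k] [NeZero n] {e : ZMod k → ZMod n → ZMod n → 𝒜}
    (h : IsMatrixUnits B e) (hE : IsUniform E e) : IsUnitaryBasis B E (weyl e) := by
  have hkn : (k * n : ℂ) ≠ 0 := mul_ne_zero (NeZero.ne _) (NeZero.ne _)
  have hstar : ∀ α, star (weyl e α) =
      ∑ ω : ZMod k × ZMod n, star (chi k n α.2 ω) • e ω.1 ω.2 (ω.2 + α.1) := by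
    intro α
    simp only [weyl, star_sum, star_smul, h.star_eq]
  have hmul : ∀ α β, star (weyl e α) * weyl e β = ∑ ω : ZMod k × ZMod n,
      (star (chi k n α.2 ω) * chi k n β.2 (ω.1, ω.2 + α.1 - β.1)) •
        e ω.1 ω.2 (ω.2 + α.1 - β.1) := by
    intro α β
    rw [hstar, weyl, Finset.sum_mul]
    refine Finset.sum_congr rfl fun ω _ => ?_
    rw [Finset.mul_sum, Finset.sum_eq_single (ω.1, ω.2 + α.1 - β.1)]
    · simp [h.mul_eq, smul_smul, mul_comm]
    · rintro ⟨s, i⟩ _ hne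
      rw [smul_mul_assoc, mul_smul_comm, h.mul_eq, if_neg, smul_zero, smul_zero]
      rintro ⟨h1, h2⟩
      apply hne
      simp only at h1 h2
      simp [h1, h2]
    · simp
  refine ⟨?_, ?_, ?_, ?_, ?_⟩
  · intro α
    exact sum_mem fun ω _ => SMulMemClass.smul_mem _ (h.mem _ _ _)
  · intro α
    rw [hmul]
    simp only [add_sub_cancel_right, Prod.mk.eta, star_chi_mul_self, one_smul]
    rw [Fintype.sum_prod_type, h.sum_one]
  · intro α
    rw [hstar, weyl, Finset.sum_mul]
    have : ∀ ω : ZMod k × ZMod n, chi k n α.2 ω • e ω.1 (ω.2 + α.1) ω.2 *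
        ∑ ω : ZMod k × ZMod n, star (chi k n α.2 ω) • e ω.1 ω.2 (ω.2 + α.1) =
        e ω.1 (ω.2 + α.1) (ω.2 + α.1) := by
      intro ω
      rw [Finset.mul_sum, Finset.sum_eq_single ω]
      · rw [smul_mul_assoc, mul_smul_comm, h.mul_eq, smul_smul, mul_comm, star_chi_mul_self]
        simp
      · rintro ⟨s, i⟩ _ hne
        rw [smul_mul_assoc, mul_smul_comm, h.mul_eq, if_neg, smul_zero, smul_zero]
        rintro ⟨h1, h2⟩
        exact hne (Prod.ext h1.symm h2.symm)
      · simp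
    simp only [this]
    rw [Fintype.sum_prod_type, ← h.sum_one]
    exact Finset.sum_congr rfl fun s _ => Equiv.sum_comp (Equiv.addRight α.1) fun i => e s i i
  · rintro ⟨a, q⟩ ⟨a', q'⟩
    rw [hmul]
    simp only [map_sum, map_smul, hE _, ZMod.card]
    by_cases ha : a = a'
    · subst ha
      simp only [add_sub_cancel_right, if_true, Prod.mk.eta, smul_smul, Prod.mk.injEq, true_and]
      rw [← Finset.sum_smul, ← Finset.sum_mul, sum_star_chi_mul']
      split_ifs with hq
      · rw [mul_inv_cancel₀ hkn, one_smul]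
      · simp
    · have : ∀ i : ZMod n, ¬ (i = i + a - a') := by
        intro i hi
        apply ha
        have : a - a' = 0 := by
          rw [add_sub_assoc] at hi
          exact left_eq_add.1 hi
        exact sub_eq_zero.1 this
      simp [this, ha]
  · intro c hc
    have he : ∀ s i j, (k * n : ℂ)⁻¹ • ∑ q, star (chi k n q (s, j)) • weyl e (i - j, q) =
        e s i j := by
      intro s i j
      simp only [weyl, Finset.smul_sum]
      rw [Finset.sum_comm]
      simp only [smul_smul, ← mul_assoc, ← Finset.sum_smul]
      simp only [mul_assoc, ← Finset.mul_sum, sum_star_chi_mul]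
      rw [Finset.sum_eq_single (s, j)]
      · rw [if_pos rfl, inv_mul_cancel₀ hkn, one_smul, add_sub_cancel]
      · intro b _ hb
        simp [Ne.symm hb]
      · simp
    obtain ⟨a, rfl⟩ := h.span c hc
    have hc' : (∑ s, ∑ i, ∑ j, a s i j • e s i j) ∈ Submodule.span ℂ (Set.range (weyl e)) := by
      refine sum_mem fun s _ => sum_mem fun i _ => sum_mem fun j _ => Submodule.smul_mem _ _ ?_
      rw [← he]
      exact Submodule.smul_mem _ _ (sum_mem fun q _ => Submodule.smul_mem _ _
        (Submodule.subset_span ⟨_, rfl⟩))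
    obtain ⟨t, ht⟩ := (Submodule.mem_span_range_iff_exists_fun ℂ).1 hc'
    exact ⟨t, ht.symm⟩

/-- The data extracted from the inclusion: a conditional expectation which on the relative
commutant is a trace invariant under the normalizer and which has a unitary orthonormal basis
there. -/
lemma HasIndex.exists_unitaryBasis [Nontrivial 𝒜] (H : HasIndex B E r)
    (hreg : IsRegular (B : Set 𝒜)) (hA : IsSimpleCStar (Set.univ : Set 𝒜)) :
    ∃ (N : ℕ) (w : Fin N → 𝒜) (E₁ : 𝒜 →ₗ[ℂ] 𝒜), IsCondExp (B : Set 𝒜) E₁ ∧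
      IsUnitaryBasis B E₁ w ∧
      (∀ c ∈ commutant B, ∀ d ∈ commutant B, E₁ (c * d) = E₁ (d * c)) ∧
      (∀ u ∈ normalizerMonoid B, ∀ c ∈ commutant B, E₁ (u * c * star u) = E₁ c) := by
  obtain ⟨k, n, e, E₁, hk, hn, he, hE₁, hu⟩ := H.exists_matrixUnits hreg hA
  have : NeZero k := ⟨by omega⟩
  have : NeZero n := ⟨by omega⟩
  have hw := isUnitaryBasis_weyl
    (he.reindex (ZMod.finEquiv k).symm.toEquiv (ZMod.finEquiv n).symm.toEquiv)
    (hu.reindex (ZMod.finEquiv k).symm.toEquiv (ZMod.finEquiv n).symm.toEquiv)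
  let φ := (Fintype.equivFin (ZMod n × (ZMod k × ZMod n))).symm
  refine ⟨_, fun α => weyl _ (φ α), E₁, hE₁, ⟨fun _ => hw.mem _, fun _ => hw.star_mul_self _,
    fun _ => hw.mul_star_self _, ?_, ?_⟩, fun c hc d hd => hu.trace he hc hd,
    fun u hu' c hc => hu.invariant he hu' hc⟩
  · intro α β
    rw [hw.orthonormal]
    simp only [φ.injective.eq_iff]
  · intro c hc
    obtain ⟨t, ht⟩ := hw.span c hc
    refine ⟨fun α => t (φ α), ?_⟩
    rw [ht]
    exact (φ.sum_comp fun α => t α • weyl _ α).symm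
end UnitaryBasis

/-! ### Coset representatives of the normalizer and minimality -/

section Cosets
variable {𝒜 : Type*} [CStarAlgebra 𝒜]
variable {B : StarSubalgebra ℂ 𝒜} {E : 𝒜 →ₗ[ℂ] 𝒜} {r : ℝ}

/-- `u` is the product of a unitary of `B` and an element of the relative commutant. -/
def IsInner (B : StarSubalgebra ℂ 𝒜) (u : 𝒜) : Prop :=
  ∃ b ∈ B, b ∈ unitary 𝒜 ∧ ∃ c ∈ commutant B, u = b * c

lemma IsInner.star {u : 𝒜} (h : IsInner B u) : IsInner B (star u) := by
  obtain ⟨b, hb, hbu, c, hc, rfl⟩ := h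
  refine ⟨_, star_mem hb, Unitary.star_mem hbu, _, star_mem hc, ?_⟩
  rw [star_mul, mem_commutant.1 (star_mem hc) _ (star_mem hb)]

/-- Finitely many normalizing unitaries represent the cosets of the normalizer modulo
`U(B) U(C)`, where `C` is the relative commutant; distinct ones are orthogonal over `C` for every
conditional expectation onto `B`. -/
lemma HasIndex.exists_cosets [Nontrivial 𝒜] (H : HasIndex B E r) :
    ∃ (G : ℕ) (u : Fin G → 𝒜), (∀ g, u g ∈ normalizerMonoid B) ∧
      (∀ F : 𝒜 →ₗ[ℂ] 𝒜, IsCondExp (B : Set 𝒜) F → ∀ g h, g ≠ h → ∀ c ∈ commutant B,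
        F (star (u g) * u h * c) = 0) ∧
      (∀ v ∈ normalizerMonoid B, ∃ g, ∃ b ∈ B, ∃ c ∈ commutant B, v = u g * (b * c)) := by
  have hvan : ∀ F : 𝒜 →ₗ[ℂ] 𝒜, IsCondExp (B : Set 𝒜) F → ∀ x ∈ normalizerMonoid B,
      ¬ IsInner B x → ∀ c ∈ commutant B, F (x * c) = 0 := by
    intro F hF x hx hxi c hc
    by_contra hne
    exact hxi (mem_UBC_of_ne_zero hF H.closed H.simple hx hc hne)
  have hbd : ∀ m : ℕ, (∃ u : Fin m → 𝒜, (∀ g, u g ∈ normalizerMonoid B) ∧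
      ∀ g h, g ≠ h → ¬ IsInner B (star (u g) * u h)) → (m : ℝ) ≤ r := by
    rintro m ⟨u, hu, huo⟩
    obtain ⟨n, l, hl, hr⟩ := H.qb
    have := card_le_of_unitary H.exp hl hr u (fun g => NM_mul_star (hu g)) ?_
    · simpa using this
    · intro g h
      split_ifs with hgh
      · rw [hgh, NM_star_mul (hu h), H.exp.one]
      · simpa using hvan E H.exp _ (mul_mem (star_mem_NM (hu g)) (hu h)) (huo g h hgh) 1 (one_mem _)
  obtain ⟨G, -, ⟨u, hu, huo⟩, hlast⟩ := exists_last _ hbd (m₀ := 0)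
    ⟨fun g => g.elim0, fun g => g.elim0, fun g => g.elim0⟩
  refine ⟨G, u, hu, fun F hF g h hgh c hc => hvan F hF _ (mul_mem (star_mem_NM (hu g)) (hu h))
    (huo g h hgh) c hc, ?_⟩
  intro v hv
  have : ∃ g, IsInner B (star (u g) * v) := by
    by_contra! hcon
    refine hlast ⟨Fin.cons v u, ?_, ?_⟩
    · refine Fin.cases ?_ fun s => ?_
      · exact hv
      · exact hu s
    · refine Fin.cases (Fin.cases ?_ fun j => ?_) fun i => (Fin.cases ?_ fun j => ?_)
      · intro h; exact absurd rfl h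
      · intro _ hin
        refine hcon j ?_
        simpa using hin.star
      · intro _; exact hcon i
      · intro h; exact huo i j (fun h' => h (by rw [h']))
  obtain ⟨g, b, hb, -, c, hc, hbc⟩ := this
  refine ⟨g, b, hb, c, hc, ?_⟩
  rw [← hbc, NM_mul_star_assoc (hu g)]

/-- Gram matrix of the family `u g * w α` for an arbitrary conditional expectation. -/
lemma gram_eq {G N : ℕ} {u : Fin G → 𝒜} {w : Fin N → 𝒜}
    (hu : ∀ g, u g ∈ normalizerMonoid B) (hw : ∀ α, w α ∈ commutant B) {F : 𝒜 →ₗ[ℂ] 𝒜}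
    (huo : ∀ g h, g ≠ h → ∀ c ∈ commutant B, F (star (u g) * u h * c) = 0) (g h : Fin G)
    (α β : Fin N) : F (star (u g * w α) * (u h * w β)) =
      if g = h then F (star (w α) * w β) else 0 := by
  split_ifs with hgh
  · subst hgh
    rw [star_mul, mul_assoc, NM_star_mul_assoc (hu g)]
  · have hx : star (u g) * u h ∈ normalizerMonoid B := mul_mem (star_mem_NM (hu g)) (hu h)
    rw [← huo g h hgh _ (mul_mem (conj_mem_commutant' hx (star_mem (hw α))) (hw β))]
    congr 1
    simp only [mul_assoc (star (star (u g) * u h))]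
    rw [NM_mul_star_assoc hx]
    simp only [star_mul, mul_assoc]

/-- The family `u g * w α` is a quasi-basis for the uniform expectation. -/
lemma expand_eq {G N : ℕ} {u : Fin G → 𝒜} {w : Fin N → 𝒜} (hreg : IsRegular (B : Set 𝒜))
    (h : IsCondExp (B : Set 𝒜) E)
    (hu : ∀ g, u g ∈ normalizerMonoid B) (hw : IsUnitaryBasis B E w)
    (huo : ∀ g h, g ≠ h → ∀ c ∈ commutant B, E (star (u g) * u h * c) = 0)
    (hcov : ∀ v ∈ normalizerMonoid B, ∃ g, ∃ b ∈ B, ∃ c ∈ commutant B, v = u g * (b * c)) (x : 𝒜) :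
    ∑ q : Fin G × Fin N, u q.1 * w q.2 * E (star (u q.1 * w q.2) * x) = x := by
  let T : 𝒜 →ₗ[ℂ] 𝒜 := ∑ q : Fin G × Fin N, LinearMap.mulLeft ℂ (u q.1 * w q.2) ∘ₗ E ∘ₗ
    LinearMap.mulLeft ℂ (star (u q.1 * w q.2))
  have hT : ∀ x, T x = ∑ q : Fin G × Fin N, u q.1 * w q.2 * E (star (u q.1 * w q.2) * x) := by
    intro x; simp [T, mul_assoc]
  have := span_normalizer_dense hreg (LinearMap.ker (T - LinearMap.id)) ?_ ?_ x
  · rw [LinearMap.mem_ker, LinearMap.sub_apply, sub_eq_zero, hT] at this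
    exact this
  · have : ((LinearMap.ker (T - LinearMap.id) : Submodule ℂ 𝒜) : Set 𝒜) =
        {x | ∑ q : Fin G × Fin N, u q.1 * w q.2 * E (star (u q.1 * w q.2) * x) = x} := by
      ext x
      simp only [SetLike.mem_coe, LinearMap.mem_ker, LinearMap.sub_apply, sub_eq_zero, hT]
      rfl
    rw [this]
    have hc := h.continuous
    exact isClosed_eq (by fun_prop) continuous_id
  · intro v hv
    obtain ⟨g, b, hb, c, hc, rfl⟩ := hcov v hv
    obtain ⟨t, rfl⟩ := hw.span c hc
    rw [← mem_commutant.1 hc b hb, Finset.sum_mul, Finset.mul_sum]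
    refine sum_mem fun β _ => ?_
    rw [smul_mul_assoc, mul_smul_comm, ← mul_assoc]
    refine Submodule.smul_mem _ _ ?_
    rw [LinearMap.mem_ker, LinearMap.sub_apply, sub_eq_zero, hT]
    simp only [LinearMap.id_apply, ← mul_assoc _ _ b, h.mul_right hb, gram_eq hu hw.mem huo,
      hw.orthonormal]
    rw [Finset.sum_eq_single (g, β)]
    · simp
    · rintro ⟨g', β'⟩ _ hne
      by_cases hg : g' = g
      · subst hg
        have : β' ≠ β := fun h' => hne (by rw [h'])
        simp [this]
      · simp [hg]
    · simp
end Cosets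

section Minimality
variable {𝒜 : Type*} [CStarAlgebra 𝒜]
variable {B : StarSubalgebra ℂ 𝒜}

/-- The theorem for a nontrivial algebra. -/
theorem exists_unitary_quasiBasis [Nontrivial 𝒜] (hcl : IsClosed (B : Set 𝒜))
    (hA : IsSimpleCStar (Set.univ : Set 𝒜)) (hB : IsSimpleCStar (B : Set 𝒜))
    (hreg : IsRegular (B : Set 𝒜)) {E₀ : 𝒜 →ₗ[ℂ] 𝒜} (hE₀ : IsMinimalCondExp (B : Set 𝒜) E₀) :
    ∃ (m : ℕ) (v : Fin m → 𝒜), (∀ k, v k ∈ unitary 𝒜) ∧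
      (∀ k l, E₀ (star (v k) * v l) = if k = l then (1 : 𝒜) else 0) ∧
      (∀ x : 𝒜, x = ∑ k, E₀ (x * v k) * star (v k)) := by
  obtain ⟨h₀, r₀, n, l, hl, hr, hmin⟩ := hE₀
  have H : HasIndex B E₀ r₀ := ⟨hcl, hB, h₀, n, l, hl, hr⟩
  obtain ⟨N, w, E₁, h₁, hw, htr, hinv⟩ := H.exists_unitaryBasis hreg hA
  obtain ⟨G, u, hu, huo, hcov⟩ := H.exists_cosets
  let φ : Fin (Fintype.card (Fin G × Fin N)) ≃ Fin G × Fin N := (Fintype.equivFin _).symm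
  set m := Fintype.card (Fin G × Fin N) with hm
  let v : Fin m → 𝒜 := fun k => u (φ k).1 * w (φ k).2
  have hvv : ∀ k, v k * star (v k) = 1 := by
    intro k
    simp only [v, star_mul, mul_assoc]
    rw [← mul_assoc (w _) (star (w _)), hw.mul_star_self, one_mul, NM_mul_star (hu _)]
  have hvv' : ∀ k, star (v k) * v k = 1 := by
    intro k
    simp only [v, star_mul, mul_assoc]
    rw [NM_star_mul_assoc (hu _), hw.star_mul_self]
  have hexp : ∀ x, ∑ k, v k * E₁ (star (v k) * x) = x := by
    intro x
    exact (φ.sum_comp fun q => u q.1 * w q.2 * E₁ (star (u q.1 * w q.2) * x)).trans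
      (expand_eq hreg h₁ hu hw (huo E₁ h₁) hcov x)
  have hon : ∀ i j, E₁ (star (v i) * v j) = if i = j then 1 else 0 := by
    intro i j
    simp only [v]
    rw [gram_eq hu hw.mem (huo E₁ h₁), hw.orthonormal]
    have : i = j ↔ (φ i).1 = (φ j).1 ∧ (φ i).2 = (φ j).2 := by
      rw [← Prod.ext_iff, φ.injective.eq_iff]
    by_cases h1 : (φ i).1 = (φ j).1 <;> by_cases h2 : (φ i).2 = (φ j).2 <;> simp [this, h1, h2]
  have hqb : IsRightQB E₁ v := by
    intro x
    have := congrArg star (hexp (star x))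
    rw [star_star, star_sum] at this
    conv_lhs => rw [← this]
    refine Finset.sum_congr rfl fun k _ => ?_
    rw [star_mul, ← h₁.star_apply]; simp
  have hsum : ∑ k, v k * star (v k) = ((m : ℝ) : ℂ) • 1 := by
    simp [hvv, Nat.cast_smul_eq_nsmul]
  have hle : r₀ ≤ m := hmin E₁ h₁ m v hqb m hsum
  -- The average over `E₁` of the Gram operator of `v` with respect to `E₀` is the number `m`.
  have hQ : E₁ (∑ i, ∑ j, v i * E₀ (star (v i) * v j) * star (v j)) = ((m : ℝ) : ℂ) • 1 := by
    have hτ : ∀ α β, ∃ t : ℂ, E₀ (star (w α) * w β) = t • 1 := fun α β =>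
      h₀.scalar_of_mem_commutant hcl hB (mul_mem (star_mem (hw.mem α)) (hw.mem β))
    choose τ hτ using hτ
    have hE : ∀ i j, E₁ (v i * E₀ (star (v i) * v j) * star (v j)) = if i = j then 1 else 0 := by
      intro i j
      simp only [v]
      rw [gram_eq hu hw.mem (huo E₀ h₀)]
      by_cases h1 : (φ i).1 = (φ j).1
      · rw [if_pos h1, hτ, mul_smul_comm, smul_mul_assoc, mul_one, map_smul, h1]
        have : u (φ j).1 * w (φ i).2 * star (u (φ j).1 * w (φ j).2) =
            u (φ j).1 * (w (φ i).2 * star (w (φ j).2)) * star (u (φ j).1) := by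
          simp only [star_mul, mul_assoc]
        rw [this, hinv _ (hu _) _ (mul_mem (hw.mem _) (star_mem (hw.mem _))),
          htr _ (hw.mem _) _ (star_mem (hw.mem _)), hw.orthonormal]
        by_cases h2 : (φ i).2 = (φ j).2
        · have hij : i = j := φ.injective (Prod.ext h1 h2)
          rw [if_pos h2.symm, if_pos hij, h2, ← hτ, hw.star_mul_self, h₀.one]
        · rw [if_neg (Ne.symm h2), smul_zero, if_neg]
          rintro rfl; exact h2 rfl
      · rw [if_neg h1, if_neg]
        · simp
        · rintro rfl; exact h1 rfl
    simp [map_sum, hE, Nat.cast_smul_eq_nsmul]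
  let y : Fin n → 𝒜 := fun k => l k - ∑ i, v i * E₀ (star (v i) * l k)
  have hE₁y : E₁ (∑ k, y k * star (y k)) = ((r₀ - m : ℝ) : ℂ) • 1 := by
    simp only [y]
    rw [bessel h₀ hl v, map_add, map_sub, map_smul, hQ, hr, hsum, map_smul, map_smul, h₁.one]
    simp only [smul_smul, ← sub_smul, ← add_smul]
    congr 1; push_cast; ring
  have hpos : ∀ k, ∃ s, E₁ (y k * star (y k)) = star s * s := by
    intro k
    obtain ⟨s, hs⟩ := h₁.2.2.1 (star (y k))
    exact ⟨s, by rw [← hs, star_star]⟩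
  choose s hs using hpos
  have hss : ∑ k, star (s k) * s k = ((r₀ - m : ℝ) : ℂ) • 1 := by
    rw [← hE₁y, map_sum]; simp only [hs]
  have hr0 : r₀ - m = 0 := by
    obtain ⟨a, ha⟩ := exists_star_mul_self_sum Finset.univ s
    rw [hss] at ha
    have := (scalar_nonneg ha).1
    rw [Complex.ofReal_re] at this
    linarith
  have hy : ∀ k, y k = 0 := by
    intro k
    rw [hr0, Complex.ofReal_zero, zero_smul] at hss
    have h1 := star_mul_self_eq_zero_of_sum Finset.univ s hss k (Finset.mem_univ k)
    have h2 : star (y k) = 0 := faithful h₁ hqb hsum (by rw [star_star, hs, h1])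
    exact star_eq_zero.1 h2
  have hexp₀ : ∀ x, ∑ i, v i * E₀ (star (v i) * x) = x := by
    intro x
    have h1 : ∀ k, l k = ∑ i, v i * E₀ (star (v i) * l k) := fun k => sub_eq_zero.1 (hy k)
    have h2 := IsRightQB.expand h₀ hl x
    conv_rhs => rw [← h2]
    have h3 : ∀ i, E₀ (star (v i) * x) = ∑ k, E₀ (star (v i) * l k) * E₀ (star (l k) * x) := by
      intro i
      conv_lhs => rw [← h2, Finset.mul_sum, map_sum]
      refine Finset.sum_congr rfl fun k _ => ?_
      rw [← mul_assoc, h₀.mul_right (h₀.mem _)]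
    simp only [h3, Finset.mul_sum]
    rw [Finset.sum_comm]
    refine Finset.sum_congr rfl fun k _ => ?_
    conv_rhs => enter [1]; rw [h1 k]
    rw [Finset.sum_mul]
    simp only [mul_assoc]
  refine ⟨m, v, fun k => Unitary.mem_iff.2 ⟨hvv' k, hvv k⟩, ?_, ?_⟩
  · intro k j
    have h1 := congrArg (fun x => E₁ (star (v k) * x)) (hexp₀ (v j))
    simp only [Finset.mul_sum, map_sum, ← mul_assoc, h₁.mul_right (h₀.mem _), hon] at h1
    simpa using h1
  · intro x
    have := congrArg star (hexp₀ (star x))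
    rw [star_star, star_sum] at this
    conv_lhs => rw [← this]
    refine Finset.sum_congr rfl fun k _ => ?_
    rw [star_mul, ← h₀.star_apply]; simp
end Minimality

/-- the minimal conditional expectation of a regular inclusion `B ⊂ A` of
simple unital C*-algebras with a finite-index conditional expectation admits a unitary
orthonormal quasi-basis. -/
theorem minimal_CE_of_regular_inclusion_has_unitary_ON_quasi_basis
    (B : StarSubalgebra ℂ A) (hBclosed : IsClosed (B : Set A))
    (hAsimple : IsSimpleCStar (Set.univ : Set A))
    (hBsimple : IsSimpleCStar (B : Set A))
    (hreg : IsRegular (B : Set A))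
    (E : A →ₗ[ℂ] A) (hE : IsCondExp (B : Set A) E)
    (nE : ℕ) (lE : Fin nE → A) (hlE : IsRightQB E lE)
    (E₀ : A →ₗ[ℂ] A) (hE₀ : IsMinimalCondExp (B : Set A) E₀) :
    ∃ (m : ℕ) (v : Fin m → A),
      (∀ k, v k ∈ unitary A) ∧
      (∀ k l, E₀ (star (v k) * v l) = if k = l then (1 : A) else 0) ∧
      (∀ x : A, x = ∑ k, E₀ (x * v k) * star (v k)) := by
  rcases subsingleton_or_nontrivial A with hA | hA
  · exact ⟨0, fun k => k.elim0, fun k => k.elim0, fun k => k.elim0, fun x => Subsingleton.elim _ _⟩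
  · letI : CStarAlgebra A :=
      { (inferInstance : NormedRing A), (inferInstance : StarRing A),
        (inferInstance : CompleteSpace A), (inferInstance : CStarRing A),
        (inferInstance : NormedAlgebra ℂ A), (inferInstance : StarModule ℂ A) with }
    exact exists_unitary_quasiBasis hBclosed hAsimple hBsimple hreg hE₀

end RegularInclusion
end

section
/- Let B ⊆ A be an inclusion of simple unital C*-algebras with common unit admitting a finite-index conditional expectation, and let C := C*(B ∪ C_A(B)). Then the inclusion B ⊂ A is regular if and only if there exist a finite group G and a map u : G → U(A) with u_e = 1 such that: (i) u_g B u_g* = B and u_g C u_g* = C for all g ∈ G; (ii) σ(g,h) := u_g u_h u_{gh}* lies in U(B)·U(C_A(B)) ⊆ U(C) for all g, h ∈ G; (iii) for every g ≠ e the automorphism Ad(u_g)|_B of B is outer; and (iv) every x ∈ A can be written uniquely as x = Σ_{g ∈ G} u_g c_g with c_g ∈ C. (Conditions (i)–(iv) say that (α, σ) with α_g = Ad(u_g)|_C is a cocycle action of G on C leaving B outerly invariant and that (B ⊂ A) ≅ (B ⊂ C ⋊^r_{(α,σ)} G).) -/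
/-!
Let `N` be the normalizer of `B` and `C` the C⋆-algebra generated by `B` and `C_A(B)`.

If `A` is the sum of the `u_g C`, then `B` is regular: `B` and `C_A(B)` are C⋆-algebras, hence
spanned by their unitaries, and those normalize `B` (`genC_le_closure_adjoin`).

Conversely, let `B` be regular and let `G` be the generalized Weyl group
`N / (U(B)·U(C_A(B)))` (`WeylGroup`), with representatives `u_g` and `u_1 = 1`. The cocycle and
outerness conditions hold by construction.

* Outerness forces `E(C w) = 0` for `w ∈ N` outside `U(B)·U(C_A(B))` (`condExp_mul_eq_zero`): if
  `c` centralizes `B`, then `y = E(c w) ∈ B` satisfies `y b = (w b w*) y`, and in a simple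
  algebra such a `y` is zero or a multiple of a unitary implementing `Ad(w)` on `B`
  (`mem_UBC_of_intertwiner`).
* The span of the `u_g C` is dense. Approximating the quasi-basis `λ_i*` by elements `μ_i` of
  `Σ_{g ∈ F} u_g C` with `F` finite makes `x ↦ Σ E(x λ_i) μ_i` invertible, so
  `A = Σ_{g ∈ F} u_g C` without taking closures (`exists_weylSpan_eq_top`).
* The vanishing of `E` and the quasi-basis identity give uniqueness of coefficients
  (`coeff_eq_zero`). Consequently `F = G`, so `G` is finite (`weylGroup_finite`).
-/


namespace RegularInclusion

variable {A : Type*} [NormedRing A] [StarRing A] [CStarRing A] [CompleteSpace A]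
  [NormedAlgebra ℂ A] [StarModule ℂ A]

/-- A bundled finite group. -/
structure FiniteGroupData : Type 1 where
  G : Type
  [grp : Group G]
  [fin : Fintype G]

attribute [instance] FiniteGroupData.grp FiniteGroupData.fin

set_option linter.unusedSectionVars false

/-! ### C⋆-algebraic preliminaries -/

/-- The bundled form of the standing C⋆-algebra assumptions on `A`. -/
@[reducible]
def bundledCStar (A : Type*) [NormedRing A] [StarRing A] [CStarRing A] [CompleteSpace A]
    [NormedAlgebra ℂ A] [StarModule ℂ A] : CStarAlgebra A where

lemma condExp_bound {B : Set A} {E : A →ₗ[ℂ] A} (hE : IsCondExp B E) :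
    ∃ K : ℝ, 0 ≤ K ∧ ∀ x, ‖E x‖ ≤ K * ‖x‖ := by
  let _ := bundledCStar A
  let _ := CStarAlgebra.spectralOrder A
  have := CStarAlgebra.spectralOrderedRing A
  have hpos : ∀ x : A, 0 ≤ x → 0 ≤ E x := by
    intro x hx
    obtain ⟨s, rfl⟩ := CStarAlgebra.nonneg_iff_eq_star_mul_self.1 hx
    obtain ⟨y, hy⟩ := hE.2.2.1 s
    rw [hy]
    exact star_mul_self_nonneg y
  obtain ⟨K, hK⟩ := PositiveLinearMap.exists_norm_apply_le (PositiveLinearMap.mk₀ E hpos)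
  exact ⟨K, K.2, hK⟩

lemma mem_span_unitary (S : StarSubalgebra ℂ A) (hS : IsClosed (S : Set A)) {x : A}
    (hx : x ∈ S) : x ∈ Submodule.span ℂ {v : A | v ∈ S ∧ v ∈ unitary A} := by
  let _ := bundledCStar A
  have := hS
  let _ : CStarAlgebra S := StarSubalgebra.cstarAlgebra S
  obtain ⟨v, c, h, -⟩ := CStarAlgebra.exists_sum_four_unitary (⟨x, hx⟩ : S)
  have h' : x = ∑ i, c i • ((v i : S) : A) := by
    have := congrArg (Subtype.val : S → A) h
    simpa using this
  rw [h']
  refine Submodule.sum_mem _ fun i _ => Submodule.smul_mem _ _ (Submodule.subset_span ?_)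
  refine ⟨(v i : S).2, ?_⟩
  have := (v i).2
  rw [Unitary.mem_iff] at this ⊢
  exact ⟨congrArg (Subtype.val : S → A) this.1, congrArg (Subtype.val : S → A) this.2⟩

/-! ### Intertwiners in a simple algebra -/

section

variable {B : StarSubalgebra ℂ A}

/-- An element `y ≠ 0` of the simple algebra `B` with `yB = By` is invertible: the closure of
`yB` is a nonzero closed two-sided ideal, so `yB = By` contains elements close to `1`. -/
lemma isUnit_of_normal (hBclosed : IsClosed (B : Set A)) (hB : IsSimpleCStar (B : Set A))
    {y : A} (hy : y ∈ B) (hy0 : y ≠ 0)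
    (h1 : ∀ b ∈ B, ∃ b' ∈ B, y * b = b' * y) (h2 : ∀ b ∈ B, ∃ b' ∈ B, b * y = y * b') :
    IsUnit y := by
  set S : Set A := (fun b => y * b) '' (B : Set A) with hS
  have hmaps : ∀ f : A → A, Continuous f → Set.MapsTo f S S →
      ∀ x ∈ closure S, f x ∈ closure S := fun f hf hm x hx => hm.closure hf hx
  have hI := hB (closure S) ?_ isClosed_closure ?_ ?_ ?_
  · have hyS : y ∈ closure S := subset_closure ⟨1, one_mem B, by simp⟩
    have h1S : (1 : A) ∈ closure S := by
      rcases hI with hI | hI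
      · rw [hI] at hyS
        exact absurd hyS hy0
      · rw [hI]
        exact one_mem B
    obtain ⟨_, ⟨b, hb, rfl⟩, hdist⟩ := Metric.mem_closure_iff.1 h1S 1 one_pos
    have hu : IsUnit (y * b) := by
      have := isUnit_one_sub_of_norm_lt_one (x := 1 - y * b) (by simpa [dist_eq_norm] using hdist)
      simpa using this
    obtain ⟨b', hb', hbb'⟩ := h1 b hb
    obtain ⟨v, hv⟩ := hu
    rw [isUnit_iff_exists_and_exists]
    refine ⟨⟨b * ↑v⁻¹, ?_⟩, ⟨↑v⁻¹ * b', ?_⟩⟩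
    · rw [← mul_assoc, ← hv, Units.mul_inv]
    · rw [mul_assoc, ← hbb', ← hv, Units.inv_mul]
  · refine closure_minimal ?_ hBclosed
    rintro _ ⟨b, hb, rfl⟩
    exact mul_mem hy hb
  · exact subset_closure ⟨0, zero_mem B, by simp⟩
  · intro x hx z hz
    refine map_mem_closure₂ continuous_add hx hz ?_
    rintro _ ⟨a, ha, rfl⟩ _ ⟨b, hb, rfl⟩
    exact ⟨a + b, add_mem ha hb, mul_add _ _ _⟩
  · intro x hx b hb
    refine ⟨hmaps (fun t => t * b) (by fun_prop) ?_ x hx,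
      hmaps (fun t => b * t) (by fun_prop) ?_ x hx⟩
    · rintro _ ⟨a, ha, rfl⟩
      exact ⟨a * b, mul_mem ha hb, (mul_assoc _ _ _).symm⟩
    · rintro _ ⟨a, ha, rfl⟩
      obtain ⟨b', hb', h⟩ := h2 b hb
      exact ⟨b' * a, mul_mem hb' ha, by simp only [← mul_assoc, h]⟩

lemma central_eq_scalar [Nontrivial A] (hBclosed : IsClosed (B : Set A))
    (hB : IsSimpleCStar (B : Set A)) {z : A} (hz : z ∈ B) (hc : ∀ b ∈ B, z * b = b * z) :
    ∃ k : ℂ, z = algebraMap ℂ A k := by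
  obtain ⟨k, hk⟩ := spectrum.nonempty z
  refine ⟨k, ?_⟩
  by_contra hne
  refine hk (isUnit_of_normal hBclosed hB (sub_mem (algebraMap_mem B k) hz)
    (sub_ne_zero.2 (Ne.symm hne)) ?_ ?_)
  · exact fun b hb => ⟨b, hb, by rw [sub_mul, mul_sub, hc b hb, Algebra.commutes]⟩
  · exact fun b hb => ⟨b, hb, by rw [sub_mul, mul_sub, hc b hb, Algebra.commutes]⟩

/-- Both inclusions `wBw* ⊆ B` and `w*Bw ⊆ B`, elementwise. -/
lemma mem_normalizer_iff {w : A} : w ∈ normalizer (B : Set A) ↔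
    w ∈ unitary A ∧ (∀ b ∈ B, w * b * star w ∈ B) ∧ (∀ b ∈ B, star w * b * w ∈ B) := by
  refine and_congr_right fun hw => ?_
  rw [Unitary.mem_iff] at hw
  constructor
  · intro h
    refine ⟨fun b hb => ?_, fun b hb => ?_⟩
    · have : w * b * star w ∈ (fun x => w * x * star w) '' (B : Set A) := ⟨b, hb, rfl⟩
      rwa [h] at this
    · have : b ∈ (fun x => w * x * star w) '' (B : Set A) := by rwa [h]
      obtain ⟨a, ha, rfl⟩ := this
      have : star w * (w * a * star w) * w = (star w * w) * a * (star w * w) := by noncomm_ring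
      simpa [this, hw.1] using ha
  · rintro ⟨h1, h2⟩
    refine Set.Subset.antisymm ?_ fun b hb => ⟨star w * b * w, h2 b hb, ?_⟩
    · rintro _ ⟨b, hb, rfl⟩
      exact h1 b hb
    · have : w * (star w * b * w) * star w = (w * star w) * b * (w * star w) := by noncomm_ring
      simp [this, hw.2]

/-- A nonzero element of the simple algebra `B` that intertwines the identity with
`Ad(w)` is a multiple of a unitary `v ∈ B` with `Ad(v) = Ad(w)` on `B`; then `v*w` centralizes
`B`. -/
lemma mem_UBC_of_intertwiner (hBclosed : IsClosed (B : Set A))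
    (hB : IsSimpleCStar (B : Set A)) {w y : A} (hw : w ∈ normalizer (B : Set A)) (hy : y ∈ B)
    (hy0 : y ≠ 0) (h : ∀ b ∈ B, y * b = w * b * star w * y) : w ∈ UBC (B : Set A) := by
  have : Nontrivial A := ⟨⟨y, 0, hy0⟩⟩
  obtain ⟨hwu, hw1, hw2⟩ := mem_normalizer_iff.1 hw
  obtain ⟨hws, hws'⟩ := Unitary.mem_iff.1 hwu
  have h' : ∀ b ∈ B, star y * (w * b * star w) = b * star y := by
    intro b hb
    have := congrArg star (h (star b) (star_mem hb))
    simpa [mul_assoc] using this.symm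
  have hunit : IsUnit y := by
    refine isUnit_of_normal hBclosed hB hy hy0 (fun b hb => ⟨_, hw1 b hb, h b hb⟩)
      fun b hb => ⟨_, hw2 b hb, ?_⟩
    rw [h _ (hw2 b hb)]
    have : w * (star w * b * w) * star w = (w * star w) * b * (w * star w) := by noncomm_ring
    simp [this, hws']
  obtain ⟨k, hk⟩ := central_eq_scalar hBclosed hB (mul_mem (star_mem hy) hy) fun b hb => by
    rw [mul_assoc, h b hb, ← mul_assoc, h' b hb, mul_assoc]
  -- `y* y` is self-adjoint with nonnegative spectrum, so `k` is a positive real number.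
  obtain ⟨r, hr⟩ : ∃ r : ℝ, (r : ℂ) = k := by
    have hst := congrArg star hk
    rw [star_mul, star_star, hk, ← algebraMap_star_comm] at hst
    exact Complex.conj_eq_iff_real.1 ((algebraMap ℂ A).injective hst).symm |>.imp fun _ => Eq.symm
  have hr0 : 0 ≤ r := by
    let _ := bundledCStar A
    refine spectrum_star_mul_self_nonneg (b := y) r ?_
    rw [spectrum.mem_iff, hk, ← hr]
    have : algebraMap ℝ A r = algebraMap ℂ A (r : ℂ) := by
      rw [Algebra.algebraMap_eq_smul_one, Algebra.algebraMap_eq_smul_one, Complex.coe_smul]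
    rw [this, sub_self]
    exact not_isUnit_zero
  have hrne : r ≠ 0 := by
    rintro rfl
    rw [← hr] at hk
    simp only [Complex.ofReal_zero, map_zero] at hk
    exact hy0 (CStarRing.star_mul_self_eq_zero_iff y |>.1 hk)
  set s : ℝ := (Real.sqrt r)⁻¹ with hs
  have hss : ((s : ℂ) * (s : ℂ)) * k = 1 := by
    rw [← hr, ← Complex.ofReal_mul, ← Complex.ofReal_mul, hs, ← mul_inv, Real.mul_self_sqrt hr0,
      inv_mul_cancel₀ hrne, Complex.ofReal_one]
  set v : A := (s : ℂ) • y with hv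
  have hvB : v ∈ B := SMulMemClass.smul_mem _ hy
  have hv1 : star v * v = 1 := by
    rw [hv, star_smul, smul_mul_smul_comm, hk, Algebra.algebraMap_eq_smul_one, smul_smul]
    simp [hss]
  have hv2 : v * star v = 1 := by
    have hvu : IsUnit v := by
      rw [hv, Algebra.smul_def]
      refine IsUnit.mul (IsUnit.map _ (isUnit_iff_ne_zero.2 fun h0 => ?_)) hunit
      rw [h0] at hss
      simp at hss
    refine hvu.mul_right_cancel ?_
    rw [mul_assoc, hv1, mul_one, one_mul]
  have hvb : ∀ b ∈ B, star v * (w * b * star w) = b * star v := by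
    intro b hb
    rw [hv, star_smul, smul_mul_assoc, h' b hb, mul_smul_comm]
  refine ⟨v, star v * w, hvB, Unitary.mem_iff.2 ⟨hv1, hv2⟩, fun b hb => ?_,
    mul_mem (Unitary.star_mem (Unitary.mem_iff.2 ⟨hv1, hv2⟩)) hwu, ?_⟩
  · rw [← mul_assoc, ← hvb b hb]
    have : star v * (w * b * star w) * w = star v * w * b * (star w * w) := by noncomm_ring
    rw [this, hws, mul_one]
  · rw [← mul_assoc, hv2, one_mul]

end

/-! ### The algebra generated by `B` and its centralizer -/

section

variable {B : StarSubalgebra ℂ A}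

lemma star_mem_cent {c : A} (hc : c ∈ cent (B : Set A)) : star c ∈ cent (B : Set A) := by
  intro b hb
  have := congrArg star (hc (star b) (star_mem hb))
  simpa using this.symm

lemma mul_mem_cent {c d : A} (hc : c ∈ cent (B : Set A)) (hd : d ∈ cent (B : Set A)) :
    c * d ∈ cent (B : Set A) := by
  intro b hb
  rw [mul_assoc, hd b hb, ← mul_assoc, hc b hb, mul_assoc]

lemma one_mem_cent : (1 : A) ∈ cent (B : Set A) := fun b _ => by simp

lemma star_mem_normalizer {w : A} (hw : w ∈ normalizer (B : Set A)) :
    star w ∈ normalizer (B : Set A) := by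
  rw [mem_normalizer_iff] at hw ⊢
  exact ⟨Unitary.star_mem hw.1, by simpa using hw.2.2, by simpa using hw.2.1⟩

lemma mul_mem_normalizer {v w : A} (hv : v ∈ normalizer (B : Set A))
    (hw : w ∈ normalizer (B : Set A)) : v * w ∈ normalizer (B : Set A) := by
  rw [mem_normalizer_iff] at hv hw ⊢
  refine ⟨mul_mem hv.1 hw.1, fun b hb => ?_, fun b hb => ?_⟩
  · simpa [mul_assoc] using hv.2.1 _ (hw.2.1 b hb)
  · simpa [mul_assoc] using hw.2.2 _ (hv.2.2 b hb)

lemma unitary_mem_normalizer {b : A} (hb : b ∈ B) (hbu : b ∈ unitary A) :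
    b ∈ normalizer (B : Set A) :=
  mem_normalizer_iff.2 ⟨hbu, fun _ hx => mul_mem (mul_mem hb hx) (star_mem hb),
    fun _ hx => mul_mem (mul_mem (star_mem hb) hx) hb⟩

lemma cent_mem_normalizer {c : A} (hc : c ∈ cent (B : Set A)) (hcu : c ∈ unitary A) :
    c ∈ normalizer (B : Set A) := by
  obtain ⟨h1, h2⟩ := Unitary.mem_iff.1 hcu
  refine mem_normalizer_iff.2 ⟨hcu, fun x hx => ?_, fun x hx => ?_⟩
  · rwa [hc x hx, mul_assoc, h2, mul_one]
  · rwa [star_mem_cent hc x hx, mul_assoc, h1, mul_one]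

lemma UBC_subset_normalizer {x : A} (hx : x ∈ UBC (B : Set A)) :
    x ∈ normalizer (B : Set A) := by
  obtain ⟨b, c, hb, hbu, hc, hcu, rfl⟩ := hx
  exact mul_mem_normalizer (unitary_mem_normalizer hb hbu) (cent_mem_normalizer hc hcu)

lemma conj_mem_cent {w c : A} (hw : w ∈ normalizer (B : Set A)) (hc : c ∈ cent (B : Set A)) :
    w * c * star w ∈ cent (B : Set A) := by
  obtain ⟨hwu, hw1, hw2⟩ := mem_normalizer_iff.1 hw
  obtain ⟨h1, h2⟩ := Unitary.mem_iff.1 hwu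
  intro b hb
  calc w * c * star w * b = w * (c * (star w * b * w)) * star w := by
        rw [show w * (c * (star w * b * w)) * star w = w * c * star w * b * (w * star w) by
          noncomm_ring, h2, mul_one]
    _ = b * (w * c * star w) := by
        rw [hc _ (hw2 b hb), show w * (star w * b * w * c) * star w
          = (w * star w) * b * (w * c * star w) by noncomm_ring, h2, one_mul]

lemma mem_genC_of_mem {b : A} (hb : b ∈ B) : b ∈ genC (B : Set A) :=
  StarSubalgebra.le_topologicalClosure _ (StarAlgebra.subset_adjoin ℂ _ (Or.inl hb))

lemma mem_genC_of_cent {c : A} (hc : c ∈ cent (B : Set A)) : c ∈ genC (B : Set A) :=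
  StarSubalgebra.le_topologicalClosure _ (StarAlgebra.subset_adjoin ℂ _ (Or.inr hc))

lemma UBC_subset_genC {x : A} (hx : x ∈ UBC (B : Set A)) : x ∈ genC (B : Set A) := by
  obtain ⟨b, c, hb, -, hc, -, rfl⟩ := hx
  exact mul_mem (mem_genC_of_mem hb) (mem_genC_of_cent hc)

lemma conj_mem_genC {w c : A} (hw : w ∈ normalizer (B : Set A)) (hc : c ∈ genC (B : Set A)) :
    w * c * star w ∈ genC (B : Set A) := by
  obtain ⟨hwu, hw1, hw2⟩ := mem_normalizer_iff.1 hw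
  obtain ⟨h1, h2⟩ := Unitary.mem_iff.1 hwu
  have key : ∀ x ∈ StarAlgebra.adjoin ℂ ((B : Set A) ∪ cent (B : Set A)),
      w * x * star w ∈ genC (B : Set A) := by
    intro x hx
    induction hx using StarAlgebra.adjoin_induction with
    | mem x hx =>
      rcases hx with hx | hx
      · exact mem_genC_of_mem (hw1 x hx)
      · exact mem_genC_of_cent (conj_mem_cent hw hx)
    | algebraMap r =>
      rw [← Algebra.commutes, mul_assoc, h2, mul_one]
      exact algebraMap_mem _ r
    | add x y _ _ hx hy => rw [mul_add, add_mul]; exact add_mem hx hy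
    | mul x y _ _ hx hy =>
      have : w * (x * y) * star w = (w * x * star w) * (w * y * star w) := by
        rw [show (w * x * star w) * (w * y * star w) = w * x * (star w * w) * y * star w by
          noncomm_ring, h1]
        noncomm_ring
      rw [this]
      exact mul_mem hx hy
    | star x _ hx => simpa [mul_assoc] using star_mem hx
  have hcl : IsClosed {x : A | w * x * star w ∈ genC (B : Set A)} :=
    (StarSubalgebra.isClosed_topologicalClosure _).preimage (by fun_prop)
  exact closure_minimal (s := (StarAlgebra.adjoin ℂ ((B : Set A) ∪ cent (B : Set A)) : Set A))
    key hcl hc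

lemma conj_genC_eq {w : A} (hw : w ∈ normalizer (B : Set A)) :
    (fun x => w * x * star w) '' (genC (B : Set A) : Set A) = (genC (B : Set A) : Set A) := by
  obtain ⟨h1, h2⟩ := Unitary.mem_iff.1 hw.1
  refine Set.Subset.antisymm ?_ fun c hc => ⟨star w * c * w, ?_, ?_⟩
  · rintro _ ⟨c, hc, rfl⟩
    exact conj_mem_genC hw hc
  · simpa using conj_mem_genC (star_mem_normalizer hw) hc
  · have : w * (star w * c * w) * star w = (w * star w) * c * (w * star w) := by noncomm_ring
    simp [this, h2]

/-- `E(C w) = 0` for a normalizing unitary `w` whose action on `B` is outer. For `c` centralizing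
`B`, the element `E(c w) ∈ B` intertwines the identity with `Ad(w)`, hence vanishes. The set of
`x` with `E(c x) = 0` for all such `c` is a left `C`-module. -/
lemma condExp_mul_eq_zero (hBclosed : IsClosed (B : Set A)) (hB : IsSimpleCStar (B : Set A))
    {E : A →ₗ[ℂ] A} (hE : IsCondExp (B : Set A) E) (hEc : Continuous E) {w c : A}
    (hw : w ∈ normalizer (B : Set A)) (hwn : w ∉ UBC (B : Set A)) (hc : c ∈ genC (B : Set A)) :
    E (c * w) = 0 := by
  obtain ⟨hE1, -, -, hE4⟩ := hE
  obtain ⟨hwu, hw1, hw2⟩ := mem_normalizer_iff.1 hw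
  obtain ⟨h1, h2⟩ := Unitary.mem_iff.1 hwu
  have hEl : ∀ b ∈ B, ∀ x, E (b * x) = b * E x := fun b hb x => by
    simpa using hE4 b hb 1 (one_mem B) x
  have hEr : ∀ b ∈ B, ∀ x, E (x * b) = E x * b := fun b hb x => by
    simpa using hE4 1 (one_mem B) b hb x
  have hwV : ∀ c ∈ cent (B : Set A), E (c * w) = 0 := by
    intro c hc
    by_contra hne
    refine hwn (mem_UBC_of_intertwiner hBclosed hB hw (hE1 _) hne fun b hb => ?_)
    rw [← hEr b hb, ← hEl _ (hw1 b hb), ← mul_assoc, ← hc _ (hw1 b hb)]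
    rw [show c * (w * b * star w) * w = c * w * b * (star w * w) by noncomm_ring, h1, mul_one]
  set P : A → Prop := fun c => ∀ x, (∀ d ∈ cent (B : Set A), E (d * x) = 0) →
    ∀ d ∈ cent (B : Set A), E (d * (c * x)) = 0 with hP
  have key : ∀ x ∈ StarAlgebra.adjoin ℂ ((B : Set A) ∪ cent (B : Set A)), P x ∧ P (star x) := by
    have hPB : ∀ b ∈ B, P b := fun b hb x hx d hd => by
      rw [← mul_assoc, hd b hb, mul_assoc, hEl b hb, hx d hd, mul_zero]
    have hPc : ∀ c ∈ cent (B : Set A), P c := fun c hc x hx d hd => by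
      rw [← mul_assoc]
      exact hx _ (mul_mem_cent hd hc)
    have hPmul : ∀ x y, P x → P y → P (x * y) := fun x y hx hy z hz => by
      simpa [mul_assoc] using hx _ (hy z hz)
    have hPadd : ∀ x y, P x → P y → P (x + y) := fun x y hx hy z hz d hd => by
      rw [add_mul, mul_add, map_add, hx z hz d hd, hy z hz d hd, add_zero]
    intro x hx
    induction hx using StarAlgebra.adjoin_induction with
    | mem x hx =>
      rcases hx with hx | hx
      · exact ⟨hPB x hx, hPB _ (star_mem hx)⟩
      · exact ⟨hPc x hx, hPc _ (star_mem_cent hx)⟩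
    | algebraMap r =>
      exact ⟨hPB _ (algebraMap_mem B r), hPB _ (star_mem (algebraMap_mem B r))⟩
    | add x y _ _ hx hy => exact ⟨hPadd _ _ hx.1 hy.1, by rw [star_add]; exact hPadd _ _ hx.2 hy.2⟩
    | mul x y _ _ hx hy => exact ⟨hPmul _ _ hx.1 hy.1, by rw [star_mul]; exact hPmul _ _ hy.2 hx.2⟩
    | star x _ hx => exact ⟨hx.2, by rw [star_star]; exact hx.1⟩
  have hcl : IsClosed {x : A | E (x * w) = 0} :=
    isClosed_singleton.preimage (hEc.comp (continuous_mul_const w))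
  refine closure_minimal
    (s := (StarAlgebra.adjoin ℂ ((B : Set A) ∪ cent (B : Set A)) : Set A)) (fun x hx => ?_) hcl hc
  simpa using (key x hx).1 w hwV 1 one_mem_cent

/-! ### The generalized Weyl group -/

variable (B) in
/-- The normalizer of `B` as a subgroup of the unitary group of `A`. -/
def normalizerSubgroup : Subgroup (unitary A) where
  carrier := {w | (w : A) ∈ normalizer (B : Set A)}
  mul_mem' hv hw := mul_mem_normalizer hv hw
  one_mem' := unitary_mem_normalizer (one_mem B) (one_mem _)
  inv_mem' hw := star_mem_normalizer hw

variable (B) in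
/-- The subgroup `U(B)·U(C_A(B))` of the normalizer. -/
def innerSubgroup : Subgroup (normalizerSubgroup B) where
  carrier := {w | ((w : unitary A) : A) ∈ UBC (B : Set A)}
  mul_mem' := by
    rintro v w ⟨b, c, hb, hbu, hc, hcu, h⟩ ⟨b', c', hb', hbu', hc', hcu', h'⟩
    refine ⟨b * b', c * c', mul_mem hb hb', mul_mem hbu hbu', mul_mem_cent hc hc',
      mul_mem hcu hcu', ?_⟩
    have : (((v * w : normalizerSubgroup B) : unitary A) : A) = (b * c) * (b' * c') := by
      rw [← h, ← h']; rfl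
    rw [this, mul_assoc b c, ← mul_assoc c, hc b' hb']
    noncomm_ring
  one_mem' := ⟨1, 1, one_mem B, one_mem _, one_mem_cent, one_mem _, by simp⟩
  inv_mem' := by
    rintro w ⟨b, c, hb, hbu, hc, hcu, h⟩
    refine ⟨star b, star c, star_mem hb, Unitary.star_mem hbu, star_mem_cent hc,
      Unitary.star_mem hcu, ?_⟩
    have : (((w⁻¹ : normalizerSubgroup B) : unitary A) : A) = star (b * c) := by
      rw [← h]; rfl
    rw [this, star_mul, star_mem_cent hc _ (star_mem hb)]

instance innerSubgroup_normal : (innerSubgroup B).Normal where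
  conj_mem := by
    rintro n ⟨b, c, hb, hbu, hc, hcu, h⟩ w
    have hw : ((w : unitary A) : A) ∈ normalizer (B : Set A) := w.2
    obtain ⟨hwu, hw1, hw2⟩ := mem_normalizer_iff.1 hw
    obtain ⟨h1, h2⟩ := Unitary.mem_iff.1 hwu
    set w' : A := ((w : unitary A) : A) with hw'
    refine ⟨w' * b * star w', w' * c * star w', hw1 b hb,
      mul_mem (mul_mem hwu hbu) (Unitary.star_mem hwu), conj_mem_cent hw hc,
      mul_mem (mul_mem hwu hcu) (Unitary.star_mem hwu), ?_⟩
    change w' * ((n : unitary A) : A) * star w' = _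
    rw [h, show (w' * b * star w') * (w' * c * star w') = w' * b * (star w' * w') * c * star w' by
      noncomm_ring, h1]
    noncomm_ring

/-- The generalized Weyl group `N_A(B) / (U(B)·U(C_A(B)))`. -/
abbrev WeylGroup (B : StarSubalgebra ℂ A) := normalizerSubgroup B ⧸ innerSubgroup B

lemma weyl_mk_eq_one_iff (n : normalizerSubgroup B) :
    (QuotientGroup.mk n : WeylGroup B) = 1 ↔ ((n : unitary A) : A) ∈ UBC (B : Set A) :=
  QuotientGroup.eq_one_iff n

open Classical in
/-- A choice of representatives of the Weyl group in the normalizer, with `1` representing the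
unit. -/
noncomputable def weylRep (g : WeylGroup B) : normalizerSubgroup B :=
  if g = 1 then 1 else g.out

/-- The element of `A` underlying the representative of `g`. -/
noncomputable def weylU (g : WeylGroup B) : A := ((weylRep g : unitary A) : A)

lemma mk_weylRep (g : WeylGroup B) : (QuotientGroup.mk (weylRep g) : WeylGroup B) = g := by
  unfold weylRep
  split_ifs with h
  · rw [h]; rfl
  · exact QuotientGroup.out_eq' g

lemma weylU_one : weylU (1 : WeylGroup B) = 1 := by simp [weylU, weylRep]

lemma weylU_mem (g : WeylGroup B) : weylU g ∈ normalizer (B : Set A) := (weylRep g).2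

lemma star_weylU_mul_mem (n : normalizerSubgroup B) :
    star (weylU (QuotientGroup.mk n : WeylGroup B)) * ((n : unitary A) : A)
      ∈ UBC (B : Set A) := by
  have h : (QuotientGroup.mk ((weylRep (QuotientGroup.mk n : WeylGroup B))⁻¹ * n) : WeylGroup B)
      = 1 := by
    rw [QuotientGroup.mk_mul, QuotientGroup.mk_inv, mk_weylRep, inv_mul_cancel]
  exact (weyl_mk_eq_one_iff _).1 h

lemma star_weylU_mul_notMem {g h : WeylGroup B} (hgh : g ≠ h) :
    star (weylU g) * weylU h ∉ UBC (B : Set A) := by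
  intro hmem
  have := (weyl_mk_eq_one_iff ((weylRep g)⁻¹ * weylRep h)).2 hmem
  rw [QuotientGroup.mk_mul, QuotientGroup.mk_inv, mk_weylRep, mk_weylRep, inv_mul_eq_one] at this
  exact hgh this

lemma weyl_cocycle_mem (g h : WeylGroup B) :
    weylU g * weylU h * star (weylU (g * h)) ∈ UBC (B : Set A) := by
  refine (weyl_mk_eq_one_iff (weylRep g * weylRep h * (weylRep (g * h))⁻¹)).1 ?_
  rw [QuotientGroup.mk_mul, QuotientGroup.mk_mul, QuotientGroup.mk_inv, mk_weylRep, mk_weylRep,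
    mk_weylRep, mul_inv_cancel]

lemma weyl_outer {g : WeylGroup B} (hg : g ≠ 1) :
    ¬ ∃ v, v ∈ (B : Set A) ∧ v ∈ unitary A ∧
      ∀ x ∈ (B : Set A), weylU g * x * star (weylU g) = v * x * star v := by
  rintro ⟨v, hv, hvu, h⟩
  obtain ⟨h1, h2⟩ := Unitary.mem_iff.1 (weylU_mem g).1
  obtain ⟨hv1, hv2⟩ := Unitary.mem_iff.1 hvu
  refine hg ?_
  rw [← mk_weylRep g, weyl_mk_eq_one_iff]
  refine ⟨v, star v * weylU g, hv, hvu, fun b hb => ?_,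
    mul_mem (Unitary.star_mem hvu) (weylU_mem g).1, ?_⟩
  · calc star v * weylU g * b
        = star v * (weylU g * b * star (weylU g)) * weylU g := by
          rw [show star v * (weylU g * b * star (weylU g)) * weylU g
            = star v * weylU g * b * (star (weylU g) * weylU g) by noncomm_ring, h1, mul_one]
      _ = b * (star v * weylU g) := by
          rw [h b hb, show star v * (v * b * star v) * weylU g
            = (star v * v) * b * (star v * weylU g) by noncomm_ring, hv1, one_mul]
  · rw [← mul_assoc, hv2, one_mul]
    rfl

end

/-! ### Decomposition of `A` over the Weyl group -/

section

variable {B : StarSubalgebra ℂ A}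

/-- The subspace `Σ_{g ∈ F} u_g C` of `A`. -/
noncomputable def weylSpan (F : Finset (WeylGroup B)) : Submodule ℂ A :=
  Submodule.span ℂ {x | ∃ g ∈ F, ∃ c ∈ genC (B : Set A), x = weylU g * c}

lemma weylSpan_mono {F F' : Finset (WeylGroup B)} (h : F ⊆ F') : weylSpan F ≤ weylSpan F' :=
  Submodule.span_mono fun _ ⟨g, hg, c, hc, hx⟩ => ⟨g, h hg, c, hc, hx⟩

lemma exists_coeff_of_mem_weylSpan {F : Finset (WeylGroup B)} {x : A} (hx : x ∈ weylSpan F) :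
    ∃ c : WeylGroup B → A, (∀ g, c g ∈ genC (B : Set A)) ∧ x = ∑ g ∈ F, weylU g * c g := by
  classical
  induction hx using Submodule.span_induction with
  | mem x hx =>
    obtain ⟨g, hg, c, hc, rfl⟩ := hx
    refine ⟨fun g' => if g' = g then c else 0, fun g' => ?_, ?_⟩
    · dsimp only
      split_ifs
      exacts [hc, zero_mem _]
    · simp [hg]
  | zero => exact ⟨fun _ => 0, fun _ => zero_mem _, by simp⟩
  | add x y _ _ hx hy =>
    obtain ⟨c, hc, rfl⟩ := hx
    obtain ⟨d, hd, rfl⟩ := hy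
    exact ⟨fun g => c g + d g, fun g => add_mem (hc g) (hd g), by
      simp [mul_add, Finset.sum_add_distrib]⟩
  | smul r x _ hx =>
    obtain ⟨c, hc, rfl⟩ := hx
    exact ⟨fun g => r • c g, fun g => SMulMemClass.smul_mem _ (hc g), by simp [Finset.smul_sum]⟩

lemma mul_mem_weylSpan {F : Finset (WeylGroup B)} {b x : A} (hb : b ∈ B)
    (hx : x ∈ weylSpan F) : b * x ∈ weylSpan F := by
  induction hx using Submodule.span_induction with
  | mem x hx =>
    obtain ⟨g, hg, c, hc, rfl⟩ := hx
    obtain ⟨hu, -, h2⟩ := mem_normalizer_iff.1 (weylU_mem g)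
    refine Submodule.subset_span ⟨g, hg, star (weylU g) * b * weylU g * c,
      mul_mem (mem_genC_of_mem (h2 b hb)) hc, ?_⟩
    rw [show weylU g * (star (weylU g) * b * weylU g * c)
      = (weylU g * star (weylU g)) * b * weylU g * c by noncomm_ring,
      (Unitary.mem_iff.1 hu).2, one_mul, mul_assoc]
  | zero => rw [mul_zero]; exact zero_mem _
  | add x y _ _ hx hy => rw [mul_add]; exact add_mem hx hy
  | smul r x _ hx => rw [mul_smul_comm]; exact Submodule.smul_mem _ _ hx

variable (B) in
/-- The normalizer of `B` as a submonoid of `A`. -/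
def normalizerSubmonoid : Submonoid A where
  carrier := normalizer (B : Set A)
  mul_mem' hv hw := mul_mem_normalizer hv hw
  one_mem' := unitary_mem_normalizer (one_mem B) (one_mem _)

lemma exists_mem_weylSpan {x : A} (hx : x ∈ StarAlgebra.adjoin ℂ (normalizer (B : Set A))) :
    ∃ F : Finset (WeylGroup B), x ∈ weylSpan F := by
  classical
  have hstar : normalizer (B : Set A) ∪ star (normalizer (B : Set A))
      = (normalizerSubmonoid B : Set A) := by
    refine Set.union_eq_self_of_subset_right fun w hw => ?_
    simpa using star_mem_normalizer (Set.mem_star.1 hw)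
  have hx' : x ∈ Submodule.span ℂ (normalizerSubmonoid B : Set A) := by
    rw [← StarSubalgebra.mem_toSubalgebra, StarAlgebra.adjoin_toSubalgebra, hstar,
      ← Subalgebra.mem_toSubmodule, Algebra.adjoin_eq_span, Submonoid.closure_eq] at hx
    exact hx
  clear hx
  induction hx' using Submodule.span_induction with
  | mem w hw =>
    have hw' : w ∈ normalizer (B : Set A) := hw
    let n : normalizerSubgroup B := ⟨⟨w, hw'.1⟩, hw'⟩
    refine ⟨{QuotientGroup.mk n}, Submodule.subset_span ⟨QuotientGroup.mk n, by simp,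
      star (weylU (QuotientGroup.mk n : WeylGroup B)) * w,
      UBC_subset_genC (star_weylU_mul_mem n), ?_⟩⟩
    rw [← mul_assoc, (Unitary.mem_iff.1 (weylU_mem _).1).2, one_mul]
  | zero => exact ⟨∅, zero_mem _⟩
  | add x y _ _ hx hy =>
    obtain ⟨F, hF⟩ := hx
    obtain ⟨F', hF'⟩ := hy
    exact ⟨F ∪ F', add_mem (weylSpan_mono Finset.subset_union_left hF)
      (weylSpan_mono Finset.subset_union_right hF')⟩
  | smul r x _ hx =>
    obtain ⟨F, hF⟩ := hx
    exact ⟨F, Submodule.smul_mem _ _ hF⟩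

/-- If `B` is regular, finitely many `u_g C` span `A`. Perturb the quasi-basis elements `λ_i*` to
`μ_i ∈ Σ_{g ∈ F} u_g C`; the map `x ↦ Σ_i E(x λ_i) μ_i` is then close to the identity, hence
invertible, and its range lies in the left `B`-module `Σ_{g ∈ F} u_g C`. -/
lemma exists_weylSpan_eq_top {E : A →ₗ[ℂ] A} (hE : IsCondExp (B : Set A) E) {n : ℕ}
    {l : Fin n → A} (hl : IsRightQB E l) (hreg : IsRegular (B : Set A)) :
    ∃ F : Finset (WeylGroup B), ∀ x : A, x ∈ weylSpan F := by
  classical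
  obtain ⟨K, hK0, hK⟩ := condExp_bound hE
  set R : ℝ := ∑ i, K * ‖l i‖ with hR
  have hR0 : 0 ≤ R := Finset.sum_nonneg fun i _ => mul_nonneg hK0 (norm_nonneg _)
  set ε : ℝ := 1 / (2 * (R + 1)) with hε
  have hε0 : 0 < ε := by positivity
  have happrox : ∀ i, ∃ m : A, (∃ F : Finset (WeylGroup B), m ∈ weylSpan F) ∧
      ‖star (l i) - m‖ < ε := by
    intro i
    have hmem : star (l i) ∈ closure
        (StarAlgebra.adjoin ℂ (normalizer (B : Set A)) : Set A) := by
      rw [← StarSubalgebra.topologicalClosure_coe, show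
        (StarAlgebra.adjoin ℂ (normalizer (B : Set A))).topologicalClosure = ⊤ from hreg]
      trivial
    obtain ⟨m, hm, hd⟩ := Metric.mem_closure_iff.1 hmem ε hε0
    exact ⟨m, exists_mem_weylSpan hm, by rwa [← dist_eq_norm]⟩
  choose m hmF hm using happrox
  choose F hF using hmF
  refine ⟨Finset.univ.biUnion F, ?_⟩
  have hmem : ∀ i, m i ∈ weylSpan (Finset.univ.biUnion F) := fun i =>
    weylSpan_mono (Finset.subset_biUnion_of_mem F (Finset.mem_univ i)) (hF i)
  let D₀ : A →ₗ[ℂ] A :=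
    { toFun := fun x => ∑ i, E (x * l i) * (star (l i) - m i)
      map_add' := fun x y => by simp [add_mul, Finset.sum_add_distrib]
      map_smul' := fun r x => by simp [Finset.smul_sum] }
  have hD₀ : ∀ x, ‖D₀ x‖ ≤ 1 / 2 * ‖x‖ := by
    intro x
    calc ‖D₀ x‖ ≤ ∑ i, ‖E (x * l i) * (star (l i) - m i)‖ := by
          change ‖∑ i, E (x * l i) * (star (l i) - m i)‖ ≤ _
          exact norm_sum_le _ _
      _ ≤ ∑ i, (K * ‖l i‖) * (ε * ‖x‖) := by
          refine Finset.sum_le_sum fun i _ => ?_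
          calc ‖E (x * l i) * (star (l i) - m i)‖ ≤ ‖E (x * l i)‖ * ‖star (l i) - m i‖ :=
                norm_mul_le _ _
            _ ≤ (K * (‖x‖ * ‖l i‖)) * ε := by
                refine mul_le_mul ((hK _).trans ?_) (hm i).le (norm_nonneg _) (by positivity)
                exact mul_le_mul_of_nonneg_left (norm_mul_le _ _) hK0
            _ = (K * ‖l i‖) * (ε * ‖x‖) := by ring
      _ = R * ε * ‖x‖ := by rw [← Finset.sum_mul, ← hR, mul_assoc]
      _ ≤ 1 / 2 * ‖x‖ := by
          refine mul_le_mul_of_nonneg_right ?_ (norm_nonneg _)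
          rw [hε, mul_one_div, div_le_div_iff₀ (by positivity) (by norm_num)]
          linarith
  let D : A →L[ℂ] A := D₀.mkContinuous (1 / 2) hD₀
  have hDn : ‖D‖ < 1 := (D₀.mkContinuous_norm_le (by norm_num) hD₀).trans_lt (by norm_num)
  obtain ⟨T, hT⟩ := isUnit_one_sub_of_norm_lt_one hDn
  intro x
  have hx : x = (1 - D) ((↑T⁻¹ : A →L[ℂ] A) x) := by
    rw [← hT, ← mul_apply_eq_comp, Units.mul_inv, one_apply_eq_self]
  rw [hx]
  set y := (↑T⁻¹ : A →L[ℂ] A) x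
  have hy : (1 - D) y = ∑ i, E (y * l i) * m i := by
    have h1 : (1 - D) y = y - ∑ i, E (y * l i) * (star (l i) - m i) := rfl
    rw [h1, sub_eq_iff_eq_add, ← Finset.sum_add_distrib]
    conv_lhs => rw [hl y]
    exact Finset.sum_congr rfl fun i _ => by noncomm_ring
  rw [hy]
  exact Submodule.sum_mem _ fun i _ => mul_mem_weylSpan (hE.1 _) (hmem i)

/-- The sum `Σ u_g C` is direct: compressing `Σ u_g c_g = 0` by `E(u_h* · d)` kills all terms
with `g ≠ h`, so `E(c_h d) = 0` for `d ∈ C`; also `E(c_h u_k d) = 0` for `k ≠ 1`. Hence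
`E(c_h A) = 0`, and the quasi-basis gives `c_h = 0`. -/
lemma coeff_eq_zero (hBclosed : IsClosed (B : Set A)) (hB : IsSimpleCStar (B : Set A))
    {E : A →ₗ[ℂ] A} (hE : IsCondExp (B : Set A) E) {n : ℕ}
    {l : Fin n → A} (hl : IsRightQB E l) {F : Finset (WeylGroup B)}
    (hF : ∀ x : A, x ∈ weylSpan F) {S : Finset (WeylGroup B)} {c : WeylGroup B → A}
    (hc : ∀ g, c g ∈ genC (B : Set A)) (hsum : ∑ g ∈ S, weylU g * c g = 0)
    {h : WeylGroup B} (hh : h ∈ S) : c h = 0 := by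
  classical
  obtain ⟨K, hK0, hK⟩ := condExp_bound hE
  have hEc : Continuous E := (E.mkContinuous K hK).continuous
  have hzero : ∀ w ∈ normalizer (B : Set A), w ∉ UBC (B : Set A) →
      ∀ a ∈ genC (B : Set A), ∀ d ∈ genC (B : Set A), E (a * w * d) = 0 := by
    intro w hw hwn a ha d hd
    have : a * w * d = a * (w * d * star w) * w := by
      rw [show a * (w * d * star w) * w = a * w * d * (star w * w) by noncomm_ring,
        (Unitary.mem_iff.1 hw.1).1, mul_one]
    rw [this]
    exact condExp_mul_eq_zero hBclosed hB hE hEc hw hwn (mul_mem ha (conj_mem_genC hw hd))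
  have hcd : ∀ d ∈ genC (B : Set A), E (c h * d) = 0 := by
    intro d hd
    have h0 : E (star (weylU h) * (∑ g ∈ S, weylU g * c g) * d) = 0 := by
      rw [hsum]
      simp
    rw [Finset.mul_sum, Finset.sum_mul, map_sum, Finset.sum_eq_single h] at h0
    · rwa [← mul_assoc, (Unitary.mem_iff.1 (weylU_mem h).1).1, one_mul] at h0
    · intro g _ hgh
      have := hzero _ (mul_mem_normalizer (star_mem_normalizer (weylU_mem h)) (weylU_mem g))
        (star_weylU_mul_notMem hgh.symm) 1 (one_mem _) (c g * d) (mul_mem (hc g) hd)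
      simpa [mul_assoc] using this
    · exact fun hn => absurd hh hn
  have hall : ∀ a : A, E (c h * a) = 0 := by
    intro a
    obtain ⟨d, hd, rfl⟩ := exists_coeff_of_mem_weylSpan (hF a)
    rw [Finset.mul_sum, map_sum]
    refine Finset.sum_eq_zero fun k _ => ?_
    by_cases hk : k = 1
    · rw [hk, weylU_one, one_mul]
      exact hcd _ (hd 1)
    · rw [← mul_assoc]
      refine hzero _ (weylU_mem k) ?_ _ (hc h) _ (hd k)
      simpa [weylU_one] using star_weylU_mul_notMem (Ne.symm hk)
  rw [hl (c h)]
  exact Finset.sum_eq_zero fun i _ => by rw [hall, zero_mul]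

lemma weylGroup_finite (hBclosed : IsClosed (B : Set A)) (hB : IsSimpleCStar (B : Set A))
    {E : A →ₗ[ℂ] A} (hE : IsCondExp (B : Set A) E) {n : ℕ}
    {l : Fin n → A} (hl : IsRightQB E l) {F : Finset (WeylGroup B)}
    (hF : ∀ x : A, x ∈ weylSpan F) : Finite (WeylGroup B) := by
  classical
  rcases subsingleton_or_nontrivial A with hA | hA
  · infer_instance
  · refine Set.finite_univ_iff.1 (F.finite_toSet.subset fun g _ => ?_)
    by_contra hg
    -- An expansion of `u_g` over `F` would be a linear relation with coefficient `-1` at `g`.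
    obtain ⟨c, hc, hx⟩ := exists_coeff_of_mem_weylSpan (hF (weylU g))
    have h0 := coeff_eq_zero hBclosed hB hE hl hF (S := insert g F)
      (c := Function.update c g (-1)) (fun k => ?_) ?_ (Finset.mem_insert_self g F)
    · simp at h0
    · rcases eq_or_ne k g with rfl | hk
      · simp
      · simpa [hk] using hc k
    · rw [Finset.sum_insert hg]
      have : ∑ k ∈ F, weylU k * Function.update c g (-1) k = weylU g := by
        conv_rhs => rw [hx]
        refine Finset.sum_congr rfl fun k hk => ?_
        rw [Function.update_of_ne]
        rintro rfl
        exact hg hk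
      rw [this]
      simp

end

/-! ### Crossed products are regular -/

lemma mem_adjoin_normalizer_of_mem {B : StarSubalgebra ℂ A} (S : StarSubalgebra ℂ A)
    (hS : IsClosed (S : Set A)) (h : ∀ v ∈ S, v ∈ unitary A → v ∈ normalizer (B : Set A))
    {x : A} (hx : x ∈ S) : x ∈ StarAlgebra.adjoin ℂ (normalizer (B : Set A)) := by
  have := mem_span_unitary S hS hx
  refine Submodule.span_le (p := Subalgebra.toSubmodule
    (StarAlgebra.adjoin ℂ (normalizer (B : Set A))).toSubalgebra) |>.2 ?_ this
  exact fun v hv => StarAlgebra.subset_adjoin ℂ _ (h v hv.1 hv.2)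

lemma genC_le_closure_adjoin {B : StarSubalgebra ℂ A} (hBclosed : IsClosed (B : Set A)) :
    genC (B : Set A) ≤ (StarAlgebra.adjoin ℂ (normalizer (B : Set A))).topologicalClosure := by
  refine StarSubalgebra.topologicalClosure_mono (StarAlgebra.adjoin_le ?_)
  rintro x (hx | hx)
  · exact mem_adjoin_normalizer_of_mem B hBclosed
      (fun v hv hvu => unitary_mem_normalizer hv hvu) hx
  · have hcent : ∀ z, z ∈ StarSubalgebra.centralizer ℂ (B : Set A) ↔ z ∈ cent (B : Set A) := by
      intro z
      rw [StarSubalgebra.mem_centralizer_iff]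
      exact ⟨fun h b hb => (h b hb).1.symm,
        fun h b hb => ⟨(h b hb).symm, (h _ (star_mem hb)).symm⟩⟩
    refine mem_adjoin_normalizer_of_mem (StarSubalgebra.centralizer ℂ (B : Set A)) ?_
      (fun v hv hvu => cent_mem_normalizer ((hcent v).1 hv) hvu) ((hcent x).2 hx)
    rw [StarSubalgebra.coe_centralizer]
    exact Set.isClosed_centralizer _

/-- an inclusion `B ⊆ A` of simple unital C*-algebras with a finite-index
conditional expectation is regular iff there are a finite group `G` and unitaries
`u : G → U(A)` with `u_e = 1` such that each `u_g` normalizes `B` and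
`C := C*(B ∪ C_A(B))`, the cocycle `σ(g,h) = u_g u_h u_{gh}*` lies in
`U(B)·U(C_A(B)) ⊆ U(C)`, `Ad(u_g)|_B` is outer for `g ≠ e`, and every `x ∈ A` is
uniquely `Σ_g u_g c_g` with `c_g ∈ C`; i.e. `(α, σ)` with `α_g = Ad(u_g)|_C` is a
cocycle action of `G` on `C` leaving `B` outerly invariant and
`(B ⊂ A) ≅ (B ⊂ C ⋊^r_{(α,σ)} G)`. -/
theorem regular_iff_twisted_crossed_product
    (B : StarSubalgebra ℂ A) (hBclosed : IsClosed (B : Set A))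
    (hAsimple : IsSimpleCStar (Set.univ : Set A))
    (hBsimple : IsSimpleCStar (B : Set A))
    (E : A →ₗ[ℂ] A) (hE : IsCondExp (B : Set A) E)
    (nE : ℕ) (lE : Fin nE → A) (hlE : IsRightQB E lE) :
    IsRegular (B : Set A) ↔
      ∃ (D : FiniteGroupData) (u : D.G → A),
        u 1 = 1 ∧
        (∀ g, u g ∈ unitary A) ∧
        (∀ g, (fun x => u g * x * star (u g)) '' (B : Set A) = (B : Set A)) ∧
        (∀ g, (fun x => u g * x * star (u g)) '' (genC (B : Set A) : Set A)
          = (genC (B : Set A) : Set A)) ∧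
        (∀ g h, u g * u h * star (u (g * h)) ∈ UBC (B : Set A)) ∧
        (∀ g : D.G, g ≠ 1 →
          ¬ ∃ v, v ∈ (B : Set A) ∧ v ∈ unitary A ∧
            ∀ x ∈ (B : Set A), u g * x * star (u g) = v * x * star v) ∧
        (∀ x : A, ∃ c : D.G → A,
          (∀ g, c g ∈ (genC (B : Set A) : Set A)) ∧ x = ∑ g, u g * c g ∧
          ∀ c' : D.G → A, (∀ g, c' g ∈ (genC (B : Set A) : Set A)) →
            x = ∑ g, u g * c' g → c' = c) := by
  constructor
  · intro hreg
    obtain ⟨F, hF⟩ := exists_weylSpan_eq_top hE hlE hreg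
    have hfin : Finite (WeylGroup B) := weylGroup_finite hBclosed hBsimple hE hlE hF
    have := Fintype.ofFinite (WeylGroup B)
    have hcoeff : ∀ x : A, ∃ c : WeylGroup B → A,
        (∀ g, c g ∈ genC (B : Set A)) ∧ x = ∑ g, weylU g * c g := fun x =>
      exists_coeff_of_mem_weylSpan (weylSpan_mono (Finset.subset_univ F) (hF x))
    -- The group has to live in `Type`, so the finite Weyl group is replaced by a small copy.
    let e : Shrink.{0} (WeylGroup B) ≃* WeylGroup B := Shrink.mulEquiv
    have hFt : Fintype (Shrink.{0} (WeylGroup B)) := Fintype.ofEquiv _ e.symm.toEquiv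
    refine ⟨⟨Shrink.{0} (WeylGroup B)⟩, fun g => weylU (e g), ?_, fun g => (weylU_mem _).1,
      fun g => (weylU_mem _).2, fun g => conj_genC_eq (weylU_mem _), fun g h => ?_,
      fun g hg => weyl_outer ?_, fun x => ?_⟩
    · exact (congrArg weylU (map_one e)).trans weylU_one
    · exact (congrArg (fun k => weylU (e g) * weylU (e h) * star (weylU k) ∈ UBC (B : Set A))
        (map_mul e g h)).mpr (weyl_cocycle_mem _ _)
    · exact fun h => hg (e.injective (h.trans (map_one e).symm))
    · obtain ⟨c, hc, hx⟩ := hcoeff x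
      refine ⟨fun g => c (e g), fun g => hc _, ?_, fun c' hc' hx' => ?_⟩
      · rw [hx]
        exact (Equiv.sum_comp e.toEquiv fun g => weylU g * c g).symm
      · have hx'' : x = ∑ g, weylU g * c' (e.symm g) := by
          rw [hx', ← Equiv.sum_comp e.toEquiv]
          exact Finset.sum_congr rfl fun g _ => by simp
        funext g
        have h0 := coeff_eq_zero hBclosed hBsimple hE hlE hF (S := Finset.univ)
          (c := fun k => c' (e.symm k) - c k) (fun k => sub_mem (hc' _) (hc k))
          (by simp only [mul_sub, Finset.sum_sub_distrib]; rw [← hx'', ← hx, sub_self])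
          (Finset.mem_univ (e g))
        simpa [sub_eq_zero] using h0
  · rintro ⟨D, u, -, huu, huB, -, -, -, hdec⟩
    refine (StarSubalgebra.eq_top_iff).2 fun x => ?_
    obtain ⟨c, hc, rfl, -⟩ := hdec x
    exact sum_mem fun g _ => mul_mem
      (StarSubalgebra.le_topologicalClosure _ (StarAlgebra.subset_adjoin ℂ _ ⟨huu g, huB g⟩))
      (genC_le_closure_adjoin hBclosed (hc g))

end RegularInclusion
end
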